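/- Let u be a nondegenerate Lucas sequence with a₂ = 1 or a₂ = −1. Then for every ε > 0 there is x₀ such that for all x ≥ x₀, the number of positive integers n ≤ x with n ∣ u_n is at least x^{1/4 − ε}. -/

import Mathlib

/-!
The idea is to exhibit many `n` of the shape `n = (y!)² ∏ p`, the product being over a set of primes
`p`, all larger than `y` and all such that `p - χ(p)` is a product of two integers at most `y`. Here
`χ(p) = (Δ/p)` with `Δ = a₁² + 4 a₂`. For an odd prime `p` the term of index `p - χ(p)` is divisible
by `p`, because `a₂ = ±1` is a unit (`IsLucas.prime_dvd`). Since `u` is a divisibility sequence and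
`p ∣ u z` implies `p ^ (j + 1) ∣ u (z p ^ j)`, an integer `n` divides `u n` as soon as `p - χ(p)`
divides `n` for every odd prime `p ∣ n`, with a small extra condition at `2` (`IsLucas.self_dvd`,
`IsLucas.dvd_construct`).

The main point is therefore that at least `Z ^ (1 - η)` primes `p ≤ Z` satisfy `p - χ(p) = r k` with
`r, k ≤ Z ^ (3/4 + 2 η)`, and for this it is enough that `p - χ(p)` has a prime factor `r` of size
about `R = Z ^ (1/4 - η)` (`eventually_goodPrimes`). This is an equidistribution statement on average
over `r`. Let `disc χ r n` be the indicator of `n ≡ χ(n) (mod r)` minus its expected value. As a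
function of `n` it is periodic with mean zero, and it is uncorrelated for different primes `r`. Hence
its sums over progressions `m k`, `k ≤ X`, are bounded independently of `X`
(`abs_sum_disc_le`), and so are those of `disc χ r (m k) disc χ r' (m' k)` for `r ≠ r'`
(`abs_sum_disc_mul_le`). By Cauchy–Schwarz, expanding the square and Schur's test, bilinear sums of
`∑ r, disc χ r (i j)` are then small (`block_sq_le`, `abs_bil_le`), the diagonal `r = r'` being
controlled by counting. Vaughan's identity turns these Type I and Type II estimates into a bound
for the sum over primes (`abs_sum_vonMangoldt_disc_le`), which together with Chebyshev's bounds
gives the lower bound for the number of primes (`goodPrimes_lower`).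

To count, take `Z` a little below `(log x) ^ (4/3)` and `y = Z ^ (3/4 + 2 η)`, so that
`(y!)² = x ^ o(1)`. The sets of `k ≈ log x / log Z` primes from the collection found above yield
distinct `n ≤ x`, and there are at least `(Z ^ (1 - o(1)) / k) ^ k = Z ^ (k (1/4 - o(1)))` of them,
which is `x ^ (1/4 - o(1))` (`choose_le_countDiv`, `eventually_countDiv_ge`).
-/

open Classical in
/-- The number of positive integers `n ≤ x` with `n ∣ u n`. -/
noncomputable def countDiv (u : ℕ → ℤ) (x : ℝ) : ℕ :=
  ((Finset.Icc 1 ⌊x⌋₊).filter fun n : ℕ => (n : ℤ) ∣ u n).card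

/-! ### Divisibility in Lucas sequences -/

/-- `u` is the Lucas sequence with parameters `a₁, a₂`. -/
structure IsLucas (a₁ a₂ : ℤ) (u : ℕ → ℤ) : Prop where
  zero : u 0 = 0
  one : u 1 = 1
  step : ∀ n : ℕ, u (n + 2) = a₁ * u (n + 1) + a₂ * u n

namespace IsLucas

variable {a₁ a₂ : ℤ} {u : ℕ → ℤ}

lemma add_one (h : IsLucas a₁ a₂ u) (m n : ℕ) :
    u (m + n + 1) = u (m + 1) * u (n + 1) + a₂ * u m * u n := by
  induction n using Nat.twoStepInduction with
  | zero => simp [h.zero, h.one]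
  | one =>
    have h2 : u 2 = a₁ := by simpa [h.zero, h.one] using h.step 0
    have := h.step m
    simp only [h2, h.one, show m + 1 + 1 = m + 2 from rfl, this]
    ring
  | more n ih1 ih2 =>
    have e1 := h.step (m + n + 1)
    have e2 := h.step (n + 1)
    have e3 := h.step n
    rw [show m + (n + 2) + 1 = m + n + 1 + 2 by ring, e1,
      show m + n + 1 + 1 = m + (n + 1) + 1 by ring, ih2, ih1,
      show n + 2 + 1 = n + 1 + 2 by ring, e2, show n + 1 + 1 = n + 2 by ring, e3]
    ring

lemma dvd_mul (h : IsLucas a₁ a₂ u) (m k : ℕ) : u m ∣ u (m * k) := by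
  rcases Nat.eq_zero_or_pos m with rfl | hm
  · simp
  obtain ⟨w, rfl⟩ : ∃ w, m = w + 1 := ⟨m - 1, by omega⟩
  induction k with
  | zero => simp [h.zero]
  | succ k ih =>
    rw [show (w + 1) * (k + 1) = (w + 1) * k + w + 1 by ring, h.add_one]
    exact dvd_add (Dvd.dvd.mul_left dvd_rfl _) (Dvd.dvd.mul_right (Dvd.dvd.mul_left ih _) _)

lemma dvd_of_dvd (h : IsLucas a₁ a₂ u) {m n : ℕ} (hmn : m ∣ n) : u m ∣ u n := by
  obtain ⟨k, rfl⟩ := hmn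
  exact h.dvd_mul m k

/-- To second order in `u m`, the term `u (m k)` equals `k (u (m+1)) ^ (k-1) u m`. -/
lemma mul_expand (h : IsLucas a₁ a₂ u) {m : ℕ} (hm : 0 < m) (k : ℕ) :
    (∃ c, u (m * (k + 1)) = (k + 1) * u (m + 1) ^ k * u m + c * u m ^ 2) ∧
    ∃ d, u (m * (k + 1) + 1) = u (m + 1) ^ (k + 1) + d * u m := by
  obtain ⟨w, rfl⟩ : ∃ w, m = w + 1 := ⟨m - 1, by omega⟩
  have hw := h.step w
  induction k with
  | zero => exact ⟨⟨0, by simp⟩, ⟨0, by simp⟩⟩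
  | succ k ih =>
    obtain ⟨⟨c, hc⟩, ⟨d, hd⟩⟩ := ih
    constructor
    · have e := h.add_one ((w + 1) * (k + 1)) w
      rw [show (w + 1) * (k + 1 + 1) = (w + 1) * (k + 1) + w + 1 by ring, e, hc, hd]
      have : a₂ * u w = u (w + 2) - a₁ * u (w + 1) := by rw [hw]; ring
      refine ⟨d - a₁ * (k + 1) * u (w + 2) ^ k + c * a₂ * u w, ?_⟩
      push_cast
      simp only [show w + 1 + 1 = w + 2 from rfl]
      linear_combination ((k + 1) * u (w + 2) ^ k * u (w + 1)) * this
    · have e := h.add_one ((w + 1) * (k + 1)) (w + 1)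
      rw [show (w + 1) * (k + 1 + 1) + 1 = (w + 1) * (k + 1) + (w + 1) + 1 by ring, e, hd]
      refine ⟨d * u (w + 2) + a₂ * u ((w + 1) * (k + 1)), ?_⟩
      simp only [show w + 1 + 1 = w + 2 from rfl]
      ring

lemma pow_dvd (h : IsLucas a₁ a₂ u) {p z : ℕ} (hp : 0 < p) (hz : 0 < z) (hpz : (p : ℤ) ∣ u z)
    (j : ℕ) : (p : ℤ) ^ (j + 1) ∣ u (z * p ^ j) := by
  induction j with
  | zero => simpa using hpz
  | succ j ih =>
    obtain ⟨q, rfl⟩ : ∃ q, p = q + 1 := ⟨p - 1, by omega⟩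
    obtain ⟨⟨c, hc⟩, -⟩ := h.mul_expand (m := z * (q + 1) ^ j) (by positivity) q
    rw [show z * (q + 1) ^ (j + 1) = z * (q + 1) ^ j * (q + 1) by ring, hc]
    have h1 : ((q + 1 : ℕ) : ℤ) ∣ u (z * (q + 1) ^ j) :=
      dvd_trans (dvd_pow_self _ (by omega)) ih
    have h2 : ((q + 1 : ℕ) : ℤ) ^ (j + 1 + 1) ∣ ((q + 1 : ℕ) : ℤ) * u (z * (q + 1) ^ j) := by
      rw [pow_succ']; exact mul_dvd_mul_left _ ih
    refine dvd_add ?_ ?_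
    · have := h2.mul_right (u (z * (q + 1) ^ j + 1) ^ q)
      convert this using 1
      push_cast; ring
    · have : ((q + 1 : ℕ) : ℤ) * u (z * (q + 1) ^ j) ∣ u (z * (q + 1) ^ j) ^ 2 := by
        rw [pow_two]; exact mul_dvd_mul_right h1 _
      exact (h2.trans this).mul_left c

/-- If every prime `p ∣ n` divides some `u z` with `z ∣ n`, where `z` is `p` or prime to `p`,
then `n ∣ u n`. -/
lemma self_dvd (h : IsLucas a₁ a₂ u) {n : ℕ}
    (H : ∀ p : ℕ, p.Prime → p ∣ n → ∃ z : ℕ, 0 < z ∧ z ∣ n ∧ (p : ℤ) ∣ u z ∧ (z = p ∨ ¬ p ∣ z)) :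
    (n : ℤ) ∣ u n := by
  rw [Int.natCast_dvd]
  rw [Nat.dvd_iff_prime_pow_dvd_dvd]
  intro p k hp hk
  rcases Nat.eq_zero_or_pos k with rfl | hk0
  · simp
  obtain ⟨j, rfl⟩ : ∃ j, k = j + 1 := ⟨k - 1, by omega⟩
  obtain ⟨z, hz, hzn, hpz, hor⟩ := H p hp ((dvd_pow_self p (by omega)).trans hk)
  have h1 := h.pow_dvd hp.pos hz hpz j
  have h2 : z * p ^ j ∣ n := by
    rcases hor with rfl | hor
    · rwa [← pow_succ']
    · refine Nat.Coprime.mul_dvd_of_dvd_of_dvd ?_ hzn ((pow_dvd_pow p (by omega)).trans hk)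
      exact (((Nat.Prime.coprime_iff_not_dvd hp).2 hor).symm).pow_right j
  have h3 := h1.trans (h.dvd_of_dvd h2)
  rw [← Int.natCast_dvd]
  exact_mod_cast h3

/-- Powers of the companion matrix of the recurrence, over `ZMod p`. -/
lemma companion_pow (h : IsLucas a₁ a₂ u) (p : ℕ) (n : ℕ) :
    (!![(a₁ : ZMod p), (a₂ : ZMod p); 1, 0] : Matrix (Fin 2) (Fin 2) (ZMod p)) ^ (n + 1) =
      !![(u (n + 2) : ZMod p), (a₂ * u (n + 1) : ZMod p); (u (n + 1) : ZMod p), (a₂ * u n : ZMod p)] := by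
  induction n with
  | zero =>
    have h2 : u 2 = a₁ := by simpa [h.zero, h.one] using h.step 0
    simp [h.zero, h.one, h2]
  | succ n ih =>
    rw [pow_succ', ih]
    have e1 : (u (n + 3) : ZMod p) = a₁ * u (n + 2) + a₂ * u (n + 1) := by
      have := h.step (n + 1); rw [show n + 1 + 2 = n + 3 by ring] at this; rw [this]; push_cast; rfl
    have e2 : (u (n + 2) : ZMod p) = a₁ * u (n + 1) + a₂ * u n := by
      rw [h.step n]; push_cast; rfl
    rw [Matrix.mul_fin_two]
    ext i j
    fin_cases i <;> fin_cases j <;> simp [show n + 1 + 2 = n + 3 by ring, show n + 1 + 1 = n + 2 by ring, e1] <;>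
      rw [e2] <;> ring

/-- The Frobenius computation: modulo an odd prime `p`, writing `2C = a₁ + S` with `S² = Δ` for the
companion matrix `C` gives `2 C ^ p = a₁ + (Δ/p) S`. -/
lemma frobenius (h : IsLucas a₁ a₂ u) {p : ℕ} [hp : Fact p.Prime] (hp2 : p ≠ 2) :
    (u p : ZMod p) = (legendreSym p (a₁ ^ 2 + 4 * a₂) : ZMod p) ∧
    (2 * u (p + 1) : ZMod p) = a₁ * (1 + (legendreSym p (a₁ ^ 2 + 4 * a₂) : ZMod p)) := by
  set e : ZMod p := (legendreSym p (a₁ ^ 2 + 4 * a₂) : ZMod p) with he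
  set C : Matrix (Fin 2) (Fin 2) (ZMod p) := !![(a₁ : ZMod p), (a₂ : ZMod p); 1, 0] with hC
  set S : Matrix (Fin 2) (Fin 2) (ZMod p) := !![(a₁ : ZMod p), 2 * (a₂ : ZMod p); 2, -a₁] with hS
  have hodd : p = 2 * (p / 2) + 1 := by
    have := (hp.out.eq_two_or_odd).resolve_left hp2
    omega
  have hS2 : S ^ 2 = ((a₁ ^ 2 + 4 * a₂ : ℤ) : ZMod p) • 1 := by
    rw [pow_two, hS, Matrix.mul_fin_two]
    ext i j
    fin_cases i <;> fin_cases j <;> simp <;> ring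
  have hSp : S ^ p = e • S := by
    have : S ^ (2 * (p / 2) + 1) = e • S := by
      rw [pow_succ, pow_mul, hS2, smul_pow, one_pow, ← legendreSym.eq_pow, smul_mul_assoc, one_mul]
    exact (congrArg (S ^ ·) hodd).trans this
  have h2C : (2 : ZMod p) • C = (a₁ : ZMod p) • 1 + S := by
    rw [hS, hC]
    ext i j
    fin_cases i <;> fin_cases j <;> simp <;> ring
  have key : (2 : ZMod p) • C ^ p = (a₁ : ZMod p) • 1 + e • S := by
    have : ((2 : ZMod p) • C) ^ p = ((a₁ : ZMod p) • 1 + S) ^ p := by rw [h2C]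
    rw [add_pow_char_of_commute p ((Commute.one_left S).smul_left _), smul_pow, smul_pow,
      ZMod.pow_card, ZMod.pow_card, one_pow, hSp] at this
    exact this
  obtain ⟨q, hq⟩ : ∃ q, p = q + 1 := ⟨p - 1, by have := hp.out.pos; omega⟩
  have hCp : C ^ p = !![(u (q + 2) : ZMod p), (a₂ * u (q + 1) : ZMod p); (u (q + 1) : ZMod p), (a₂ * u q : ZMod p)] := by
    have := h.companion_pow p q
    rw [← hq] at this ⊢
    exact this
  rw [hCp] at key
  have k1 := congrFun (congrFun key 1) 0
  have k0 := congrFun (congrFun key 0) 0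
  simp [hS] at k1 k0
  have h20 : (2 : ZMod p) ≠ 0 := by
    have : ((2 : ℕ) : ZMod p) ≠ 0 := by
      rw [Ne, ZMod.natCast_eq_zero_iff]
      intro hd
      exact hp2 ((Nat.prime_dvd_prime_iff_eq hp.out Nat.prime_two).1 hd)
    exact_mod_cast this
  constructor
  · have : (u p : ZMod p) = u (q + 1) := by rw [← hq]
    rw [this]
    apply mul_left_cancel₀ h20
    rw [k1]; ring
  · have : (u (p + 1) : ZMod p) = u (q + 2) := by
      rw [show q + 2 = p + 1 by omega]
    rw [this, k0]; ring

end IsLucas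

/-- The quadratic character `n ↦ (Δ / n)` on odd `n`, extended by `0` to even `n`. -/
noncomputable def quadChar (Δ : ℤ) (n : ℕ) : ℤ := if Even n then 0 else jacobiSym Δ n

namespace IsLucas

variable {a₁ a₂ : ℤ} {u : ℕ → ℤ}

/-- For an odd prime `p`, the term of index `p - (Δ/p)` is divisible by `p`. -/
lemma prime_dvd (h : IsLucas a₁ a₂ u) (ha₂ : a₂ = 1 ∨ a₂ = -1) {p z : ℕ} (hp : p.Prime)
    (hp2 : p ≠ 2) (hz : (z : ℤ) = p - quadChar (a₁ ^ 2 + 4 * a₂) p) : (p : ℤ) ∣ u z := by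
  haveI : Fact p.Prime := ⟨hp⟩
  have hodd : ¬ Even p := by
    rw [Nat.not_even_iff_odd]; exact hp.odd_of_ne_two hp2
  rw [quadChar, if_neg hodd, ← jacobiSym.legendreSym.to_jacobiSym] at hz
  obtain ⟨h1, h2⟩ := h.frobenius (p := p) hp2
  have h20 : (2 : ZMod p) ≠ 0 := by
    have : ((2 : ℕ) : ZMod p) ≠ 0 := by
      rw [Ne, ZMod.natCast_eq_zero_iff]
      intro hd
      exact hp2 ((Nat.prime_dvd_prime_iff_eq hp Nat.prime_two).1 hd)
    exact_mod_cast this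
  rw [← ZMod.intCast_zmod_eq_zero_iff_dvd]
  have hpos := hp.pos
  rcases eq_or_ne ((a₁ ^ 2 + 4 * a₂ : ℤ) : ZMod p) 0 with h0 | h0
  · rw [(legendreSym.eq_zero_iff p _).2 h0] at h1 hz
    have : z = p := by omega
    subst this; simpa using h1
  rcases legendreSym.eq_one_or_neg_one p h0 with hs | hs
  · rw [hs] at h1 h2 hz
    obtain ⟨q, rfl⟩ : ∃ q, p = q + 1 := ⟨p - 1, by omega⟩
    have : z = q := by push_cast at hz; omega
    subst this
    have h3 : (u (z + 1 + 1) : ZMod (z + 1)) = a₁ := by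
      apply mul_left_cancel₀ h20
      rw [h2]; push_cast; ring
    have h4 := congrArg (Int.cast : ℤ → ZMod (z + 1)) (h.step z)
    rw [show z + 2 = z + 1 + 1 from rfl, h3] at h4
    push_cast at h4
    rw [h1] at h4
    rcases ha₂ with rfl | rfl <;> simpa using h4
  · rw [hs] at h1 h2 hz
    have : z = p + 1 := by omega
    subst this
    apply mul_left_cancel₀ h20
    rw [h2]; simp

lemma two_dvd (h : IsLucas a₁ a₂ u) (ha₂ : a₂ = 1 ∨ a₂ = -1) :
    (2 : ℤ) ∣ u 2 ∨ (2 : ℤ) ∣ u 3 := by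
  have h2 : u 2 = a₁ := by simpa [h.zero, h.one] using h.step 0
  have h3 : u 3 = a₁ * a₁ + a₂ := by simpa [h.one, h2] using h.step 1
  rw [h2, h3]
  rcases Int.even_or_odd' a₁ with ⟨k, hk | hk⟩
  · left; exact ⟨k, hk⟩
  · right
    rcases ha₂ with rfl | rfl
    · exact ⟨2 * k ^ 2 + 2 * k + 1, by rw [hk]; ring⟩
    · exact ⟨2 * k ^ 2 + 2 * k, by rw [hk]; ring⟩

end IsLucas

section Primes

open Finset Filter

/-! ### The discrepancy of `n ≡ χ(n)` modulo a prime -/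

/-- A completely multiplicative function with values in `{-1, 0, 1}`, periodic modulo `D`,
which vanishes on no prime outside the divisors of `D`. -/
structure SignChar (χ : ℕ → ℤ) (D : ℕ) : Prop where
  pos : 0 < D
  mul : ∀ m n, χ (m * n) = χ m * χ n
  per : ∀ n, χ (n + D) = χ n
  vals : ∀ n, χ n = 0 ∨ χ n = 1 ∨ χ n = -1
  prime : ∀ p : ℕ, p.Prime → χ p = 0 → p ∣ D

/-- The indicator function of the class `s` in `ZMod r`, minus its mean `1 / (r - 1)` over the
nonzero classes, the latter being subtracted on nonzero classes only. -/
noncomputable def centred (r : ℕ) (s : ℤ) (x : ZMod r) : ℝ :=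
  (if x = (s : ZMod r) then 1 else 0) - (if x = 0 then 0 else 1 / ((r : ℝ) - 1))

/-- The discrepancy function: the indicator of `n ≡ χ n (mod r)` minus its expected value
`1 / (r - 1)` on `n` prime to `r`, both restricted to `χ n ≠ 0`. -/
noncomputable def disc (χ : ℕ → ℤ) (r n : ℕ) : ℝ :=
  if χ n = 0 then 0 else centred r (χ n) n

/-- A majorant of `|disc χ r n|` that depends only on `n` modulo `r`. -/
noncomputable def majo (r n : ℕ) : ℝ :=
  (if (n : ZMod r) = 1 then 1 else 0) + (if (n : ZMod r) = -1 then 1 else 0) + 1 / ((r : ℝ) - 1)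

lemma majo_nonneg {r : ℕ} (hr : r.Prime) (n : ℕ) : 0 ≤ majo r n := by
  have : (2 : ℝ) ≤ r := by exact_mod_cast hr.two_le
  have : 0 ≤ 1 / ((r : ℝ) - 1) := by apply div_nonneg <;> linarith
  unfold majo
  split_ifs <;> linarith

lemma abs_disc_le_majo {χ : ℕ → ℤ} {D : ℕ} (hχ : SignChar χ D) {r : ℕ} (hr : r.Prime) (n : ℕ) :
    |disc χ r n| ≤ majo r n := by
  have : (2 : ℝ) ≤ r := by exact_mod_cast hr.two_le
  have h1 : 0 ≤ 1 / ((r : ℝ) - 1) := by apply div_nonneg <;> linarith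
  unfold disc
  split_ifs with h
  · simpa using majo_nonneg hr n
  · unfold centred majo
    rw [abs_le]
    rcases hχ.vals n with h' | h' | h'
    · exact absurd h' h
    · rw [h']; push_cast
      constructor <;> split_ifs <;> linarith
    · rw [h']; push_cast
      constructor <;> split_ifs <;> linarith

lemma abs_disc_le_one (χ : ℕ → ℤ) {r : ℕ} (hr : r.Prime) (n : ℕ) :
    |disc χ r n| ≤ 1 := by
  have : (2 : ℝ) ≤ r := by exact_mod_cast hr.two_le
  have h1 : 0 ≤ 1 / ((r : ℝ) - 1) := by apply div_nonneg <;> linarith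
  have h2 : 1 / ((r : ℝ) - 1) ≤ 1 := by rw [div_le_one] <;> linarith
  unfold disc
  split_ifs with h
  · simp
  · unfold centred
    rw [abs_le]
    constructor <;> split_ifs <;> linarith

lemma sum_centred {r : ℕ} [hr : Fact r.Prime] (s : ℤ) :
    ∑ x : ZMod r, centred r s x = 0 := by
  unfold centred
  rw [sum_sub_distrib, sum_ite_eq']
  have h : ∀ x : ZMod r, (if x = 0 then (0 : ℝ) else 1 / ((r : ℝ) - 1)) =
      1 / ((r : ℝ) - 1) - (if x = 0 then 1 / ((r : ℝ) - 1) else 0) := by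
    intro x; split_ifs <;> ring
  simp_rw [h]
  rw [sum_sub_distrib, sum_ite_eq']
  have : (2 : ℝ) ≤ r := by exact_mod_cast hr.out.two_le
  have : (r : ℝ) - 1 ≠ 0 := by linarith
  simp
  field_simp
  ring

lemma sum_range_cast_zmod (r : ℕ) [NeZero r] (g : ZMod r → ℝ) :
    ∑ j ∈ range r, g (j : ZMod r) = ∑ x : ZMod r, g x := by
  refine sum_bij (fun j _ => (j : ZMod r)) (fun _ _ => mem_univ _) ?_ ?_ ?_
  · intro a ha b hb hab
    rw [mem_range] at ha hb
    have := (ZMod.natCast_eq_natCast_iff' a b r).1 hab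
    rwa [Nat.mod_eq_of_lt ha, Nat.mod_eq_of_lt hb] at this
  · intro x _
    exact ⟨x.val, mem_range.2 (ZMod.val_lt x), by simp⟩
  · intros; rfl

/-- Along a progression with difference prime to `r`, an affine map runs through all classes. -/
lemma sum_affine {r : ℕ} [hr : Fact r.Prime] (g : ZMod r → ℝ) {q m : ℕ} (k : ℕ)
    (hq : (q : ZMod r) ≠ 0) (hm : (m : ZMod r) ≠ 0) :
    ∑ j ∈ range r, g ((m * (k + j * q) : ℕ) : ZMod r) = ∑ x : ZMod r, g x := by
  have := sum_range_cast_zmod r (fun x => g ((m : ZMod r) * (k + x * q)))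
  push_cast
  rw [this]
  have hmq := mul_ne_zero hm hq
  have hb : Function.Bijective (fun x : ZMod r => (m : ZMod r) * (k + x * q)) := by
    rw [← Finite.injective_iff_bijective]
    intro x y hxy
    have h1 := mul_left_cancel₀ hm hxy
    exact mul_right_cancel₀ hq (add_left_cancel h1)
  exact hb.sum_comp g

lemma SignChar.per_mul {χ : ℕ → ℤ} {D : ℕ} (hχ : SignChar χ D) (n t : ℕ) :
    χ (n + t * D) = χ n := by
  induction t with
  | zero => simp
  | succ t ih => rw [show n + (t + 1) * D = n + t * D + D by ring, hχ.per, ih]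

lemma SignChar.per_dvd {χ : ℕ → ℤ} {D q : ℕ} (hχ : SignChar χ D) (h : D ∣ q) (n j : ℕ) :
    χ (n + j * q) = χ n := by
  obtain ⟨c, rfl⟩ := h
  rw [show n + j * (D * c) = n + (j * c) * D by ring, hχ.per_mul]

lemma disc_per {χ : ℕ → ℤ} {D : ℕ} (hχ : SignChar χ D) {r q : ℕ} (hD : D ∣ q) (hr : r ∣ q)
    (m k : ℕ) : disc χ r (m * (k + q)) = disc χ r (m * k) := by
  have h1 : χ (m * (k + q)) = χ (m * k) := by
    rw [hχ.mul, hχ.mul]; have := hχ.per_dvd hD k 1; rw [one_mul] at this; rw [this]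
  have h2 : ((m * (k + q) : ℕ) : ZMod r) = ((m * k : ℕ) : ZMod r) := by
    have : ((q : ℕ) : ZMod r) = 0 := (ZMod.natCast_eq_zero_iff q r).2 hr
    push_cast; rw [this, add_zero]
  unfold disc
  rw [h1, h2]

lemma majo_per {r q : ℕ} (hr : r ∣ q) (m k : ℕ) : majo r (m * (k + q)) = majo r (m * k) := by
  have h2 : ((m * (k + q) : ℕ) : ZMod r) = ((m * k : ℕ) : ZMod r) := by
    have : ((q : ℕ) : ZMod r) = 0 := (ZMod.natCast_eq_zero_iff q r).2 hr
    push_cast; rw [this, add_zero]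
  unfold majo
  rw [h2]

lemma disc_zero (χ : ℕ → ℤ) {D : ℕ} (hχ : SignChar χ D) {r : ℕ} (hr : r.Prime) : disc χ r 0 = 0 := by
  have : Fact r.Prime := ⟨hr⟩
  unfold disc centred
  rcases hχ.vals 0 with h | h | h <;> simp [h]

/-- Along a progression whose difference is a multiple of `D` prime to `r`, the sign `χ` is constant
while the residue modulo `r` equidistributes, so the discrepancies cancel. -/
lemma sum_disc_block {χ : ℕ → ℤ} {D : ℕ} (hχ : SignChar χ D) {r q : ℕ} (hr : r.Prime)
    (hD : D ∣ q) (hrq : ¬ r ∣ q) (m k : ℕ) :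
    ∑ j ∈ range r, disc χ r (m * (k + j * q)) = 0 := by
  have : Fact r.Prime := ⟨hr⟩
  have hper : ∀ j, χ (m * (k + j * q)) = χ (m * k) := fun j => by
    rw [hχ.mul, hχ.mul, hχ.per_dvd hD]
  have hq : (q : ZMod r) ≠ 0 := by rwa [Ne, ZMod.natCast_eq_zero_iff]
  unfold disc
  simp_rw [hper]
  by_cases h0 : χ (m * k) = 0
  · simp [h0]
  simp only [h0, if_false]
  have hs : ((χ (m * k) : ℤ) : ZMod r) ≠ 0 := by
    rcases hχ.vals (m * k) with h | h | h
    · exact absurd h h0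
    · rw [h]; simp
    · rw [h]; simp
  by_cases hm : (m : ZMod r) = 0
  · apply sum_eq_zero
    intro j _
    unfold centred
    push_cast
    rw [hm]
    simp [hs.symm]
  · rw [sum_affine (fun x => centred r (χ (m * k)) x) k hq hm, sum_centred]

lemma sum_majo_block {r q : ℕ} (hr : r.Prime) (hrq : ¬ r ∣ q) (m k : ℕ) :
    ∑ j ∈ range r, majo r (m * (k + j * q)) ≤ 4 := by
  have : Fact r.Prime := ⟨hr⟩
  have h2 : (2 : ℝ) ≤ r := by exact_mod_cast hr.two_le
  have hq : (q : ZMod r) ≠ 0 := by rwa [Ne, ZMod.natCast_eq_zero_iff]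
  have hlast : (r : ℝ) * (1 / ((r : ℝ) - 1)) ≤ 2 := by
    rw [mul_one_div, div_le_iff₀ (by linarith)]; linarith
  unfold majo
  by_cases hm : (m : ZMod r) = 0
  · push_cast
    rw [hm]
    simp only [zero_mul, zero_ne_one, if_false, sum_const, card_range, nsmul_eq_mul]
    simp
    have : (r : ℝ) * ((r : ℝ) - 1)⁻¹ ≤ 2 := by simpa using hlast
    linarith
  · rw [sum_affine (fun x : ZMod r => (if x = 1 then (1 : ℝ) else 0) + (if x = -1 then 1 else 0) +
      1 / ((r : ℝ) - 1)) k hq hm, sum_add_distrib, sum_add_distrib, sum_ite_eq', sum_ite_eq']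
    simp only [mem_univ, if_true, sum_const, card_univ, ZMod.card, nsmul_eq_mul]
    linarith

/-! ### Sums of periodic functions -/

lemma sum_range_mul_block (h : ℕ → ℝ) (r q : ℕ) :
    ∑ k ∈ range (r * q), h k = ∑ k ∈ range q, ∑ j ∈ range r, h (k + j * q) := by
  induction r with
  | zero => simp
  | succ r ih =>
    rw [show (r + 1) * q = r * q + q by ring, sum_range_add, ih, ← sum_add_distrib]
    refine sum_congr rfl fun k _ => ?_
    rw [sum_range_succ, add_comm (r * q) k]

lemma periodic_mul {g : ℕ → ℝ} {q : ℕ} (hg : ∀ k, g (k + q) = g k) (k t : ℕ) :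
    g (k + t * q) = g k := by
  induction t with
  | zero => simp
  | succ t ih => rw [show k + (t + 1) * q = k + t * q + q by ring, hg, ih]

/-- Partial sums of a periodic function of mean zero are bounded by the `ℓ¹` norm of one period. -/
lemma abs_sum_periodic {g : ℕ → ℝ} {q : ℕ} (hq : 0 < q) (hg : ∀ k, g (k + q) = g k)
    (h0 : ∑ k ∈ range q, g k = 0) (X : ℕ) :
    |∑ k ∈ range X, g k| ≤ ∑ k ∈ range q, |g k| := by
  rw [← Nat.div_add_mod' X q, sum_range_add, sum_range_mul_block]
  simp_rw [periodic_mul hg]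
  have h1 : ∑ k ∈ range q, ∑ _j ∈ range (X / q), g k = 0 := by
    simp [← mul_sum, h0]
  rw [h1, zero_add]
  have h2 : ∀ k, g (X / q * q + k) = g k := fun k => by rw [add_comm, periodic_mul hg]
  simp_rw [h2]
  refine (abs_sum_le_sum_abs _ _).trans ?_
  exact sum_le_sum_of_subset_of_nonneg (range_mono (Nat.mod_lt X hq).le)
    (fun _ _ _ => abs_nonneg _)

lemma sum_disc_mul_zero {χ : ℕ → ℤ} {D : ℕ} (hχ : SignChar χ D) {r q : ℕ} (hr : r.Prime)
    (hD : D ∣ q) (hrq : ¬ r ∣ q) (m : ℕ) {w : ℕ → ℝ} (hw : ∀ k, w (k + q) = w k) :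
    ∑ k ∈ range (r * q), disc χ r (m * k) * w k = 0 := by
  rw [sum_range_mul_block]
  apply sum_eq_zero
  intro k _
  simp_rw [periodic_mul hw, ← sum_mul]
  rw [sum_disc_block hχ hr hD hrq, zero_mul]

lemma sum_majo_mul_le {r q : ℕ} (hr : r.Prime)
    (hrq : ¬ r ∣ q) (m : ℕ) {w : ℕ → ℝ} (hw : ∀ k, w (k + q) = w k) (hw0 : ∀ k, 0 ≤ w k) :
    ∑ k ∈ range (r * q), majo r (m * k) * w k ≤ 4 * ∑ k ∈ range q, w k := by
  rw [sum_range_mul_block, mul_sum]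
  refine sum_le_sum fun k _ => ?_
  simp_rw [periodic_mul hw, ← sum_mul]
  exact mul_le_mul_of_nonneg_right (sum_majo_block hr hrq m k) (hw0 k)

lemma sum_majo_le {r : ℕ} (hr : r.Prime) (m N : ℕ) :
    ∑ k ∈ range N, majo r (m * k) ≤ 4 * ((N : ℝ) / r + 1) := by
  have hr0 : (0 : ℝ) < r := by exact_mod_cast hr.pos
  have h1 : N ≤ (N / r + 1) * r := by
    have := Nat.div_add_mod' N r; have := Nat.mod_lt N hr.pos; nlinarith
  have h2 : ∑ k ∈ range r, majo r (m * k) ≤ 4 := by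
    have := sum_majo_block hr (q := 1) (by simpa using hr.one_lt.ne') m 0
    simpa using this
  have h2' : 0 ≤ ∑ k ∈ range r, majo r (m * k) := sum_nonneg fun _ _ => majo_nonneg hr _
  calc ∑ k ∈ range N, majo r (m * k) ≤ ∑ k ∈ range ((N / r + 1) * r), majo r (m * k) :=
        sum_le_sum_of_subset_of_nonneg (range_mono h1) (fun _ _ _ => majo_nonneg hr _)
    _ = ∑ k ∈ range r, ∑ _j ∈ range (N / r + 1), majo r (m * k) := by
        rw [sum_range_mul_block]
        refine sum_congr rfl fun k _ => sum_congr rfl fun j _ => ?_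
        exact periodic_mul (g := fun k => majo r (m * k)) (fun k => majo_per dvd_rfl m k) k j
    _ = ((N / r : ℕ) + 1) * ∑ k ∈ range r, majo r (m * k) := by
        simp [← mul_sum]
    _ ≤ ((N : ℝ) / r + 1) * 4 := by
        refine mul_le_mul ?_ h2 h2' (by positivity)
        gcongr
        exact Nat.cast_div_le
    _ = _ := by ring

lemma sum_Ioc_eq_sum_range {g : ℕ → ℝ} (h0 : g 0 = 0) (X : ℕ) :
    ∑ k ∈ Ioc 0 X, g k = ∑ k ∈ range (X + 1), g k := by
  rw [sum_range_succ', h0, add_zero, sum_Ioc_eq_sum_range_aux]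
where
  sum_Ioc_eq_sum_range_aux {g : ℕ → ℝ} {X : ℕ} :
      ∑ k ∈ Ioc 0 X, g k = ∑ k ∈ range X, g (k + 1) := by
    induction X with
    | zero => simp
    | succ X ih => rw [sum_range_succ, ← ih, sum_Ioc_succ_top (by omega)]

/-- Linear sums of the discrepancy are bounded uniformly in `m`, `r` and the length of the sum. -/
lemma abs_sum_disc_le {χ : ℕ → ℤ} {D : ℕ} (hχ : SignChar χ D) {r : ℕ} (hr : r.Prime)
    (hrD : ¬ r ∣ D) (m X : ℕ) : |∑ k ∈ Ioc 0 X, disc χ r (m * k)| ≤ 4 * D := by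
  rw [sum_Ioc_eq_sum_range (by simpa using disc_zero χ hχ hr)]
  refine (abs_sum_periodic (q := r * D) (Nat.mul_pos hr.pos hχ.pos)
    (fun k => disc_per hχ (Dvd.intro_left r rfl) (Dvd.intro D rfl) m k) ?_ _).trans ?_
  · have := sum_disc_mul_zero hχ hr dvd_rfl hrD m (w := fun _ => 1) (fun _ => rfl)
    simpa using this
  · have := sum_majo_mul_le hr hrD m (w := fun _ => 1) (fun _ => rfl) (fun _ => zero_le_one)
    refine (sum_le_sum fun k _ => abs_disc_le_majo hχ hr (m * k)).trans ?_
    simpa using this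

/-- Correlations of the discrepancies of two different primes are bounded. -/
lemma abs_sum_disc_mul_le {χ : ℕ → ℤ} {D : ℕ} (hχ : SignChar χ D) {r r' : ℕ} (hr : r.Prime)
    (hr' : r'.Prime) (hne : r ≠ r') (hrD : ¬ r ∣ D) (hrD' : ¬ r' ∣ D) (m m' X : ℕ) :
    |∑ k ∈ Ioc 0 X, disc χ r (m * k) * disc χ r' (m' * k)| ≤ 16 * D := by
  have hndvd : ¬ r ∣ r' * D := by
    rw [hr.dvd_mul]
    rintro (h | h)
    · exact hne ((Nat.prime_dvd_prime_iff_eq hr hr').1 h)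
    · exact hrD h
  have hp1 : ∀ k, disc χ r' (m' * (k + r' * D)) = disc χ r' (m' * k) := fun k =>
    disc_per hχ (Dvd.intro_left r' rfl) (Dvd.intro D rfl) m' k
  rw [sum_Ioc_eq_sum_range (by simp [disc_zero χ hχ hr])]
  refine (abs_sum_periodic (q := r * (r' * D))
    (Nat.mul_pos hr.pos (Nat.mul_pos hr'.pos hχ.pos)) (fun k => ?_) ?_ _).trans ?_
  · rw [disc_per hχ ((Dvd.intro_left r' rfl).mul_left r) (Dvd.intro _ rfl) m k,
      disc_per hχ ((Dvd.intro_left r' rfl).mul_left r) ((Dvd.intro D rfl).mul_left r) m' k]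
  · exact sum_disc_mul_zero hχ hr (Dvd.intro_left r' rfl) hndvd m hp1
  · have h1 := sum_majo_mul_le hr hndvd m (w := fun k => majo r' (m' * k))
      (fun k => majo_per (Dvd.intro D rfl) m' k) (fun _ => majo_nonneg hr' _)
    have h2 := sum_majo_mul_le hr' hrD' m' (w := fun _ => 1) (fun _ => rfl) (fun _ => zero_le_one)
    simp only [mul_one, sum_const, card_range, nsmul_eq_mul] at h2
    calc ∑ k ∈ range (r * (r' * D)), |disc χ r (m * k) * disc χ r' (m' * k)|
        ≤ ∑ k ∈ range (r * (r' * D)), majo r (m * k) * majo r' (m' * k) := by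
          refine sum_le_sum fun k _ => ?_
          rw [abs_mul]
          exact mul_le_mul (abs_disc_le_majo hχ hr _) (abs_disc_le_majo hχ hr' _) (abs_nonneg _)
            (majo_nonneg hr _)
      _ ≤ _ := h1
      _ ≤ 16 * D := by linarith

/-! ### The dispersion estimate for bilinear sums -/

/-- The discrepancy summed over a set of primes. -/
noncomputable def discSum (χ : ℕ → ℤ) (P : Finset ℕ) (n : ℕ) : ℝ := ∑ r ∈ P, disc χ r n

/-- Schur's test for a symmetric nonnegative kernel. -/
lemma schur_test (s : Finset ℕ) (k : ℕ → ℕ → ℝ) (hk : ∀ i j, 0 ≤ k i j) (hs : ∀ i j, k i j = k j i)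
    (B : ℝ) (hB : ∀ i ∈ s, ∑ j ∈ s, k i j ≤ B) (a : ℕ → ℝ) :
    ∑ i ∈ s, ∑ j ∈ s, |a i| * |a j| * k i j ≤ B * ∑ i ∈ s, a i ^ 2 := by
  have h1 : ∑ i ∈ s, ∑ j ∈ s, a i ^ 2 * k i j ≤ B * ∑ i ∈ s, a i ^ 2 := by
    rw [mul_sum]
    refine sum_le_sum fun i hi => ?_
    rw [← mul_sum, mul_comm B]
    exact mul_le_mul_of_nonneg_left (hB i hi) (sq_nonneg _)
  have h2 : ∑ i ∈ s, ∑ j ∈ s, a j ^ 2 * k i j = ∑ i ∈ s, ∑ j ∈ s, a i ^ 2 * k i j := by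
    rw [sum_comm]
    refine sum_congr rfl fun i _ => sum_congr rfl fun j _ => ?_
    rw [hs]
  have h3 : ∑ i ∈ s, ∑ j ∈ s, |a i| * |a j| * k i j ≤
      ∑ i ∈ s, ∑ j ∈ s, (a i ^ 2 * k i j / 2 + a j ^ 2 * k i j / 2) := by
    refine sum_le_sum fun i _ => sum_le_sum fun j _ => ?_
    have : |a i| * |a j| ≤ a i ^ 2 / 2 + a j ^ 2 / 2 := by
      rw [← sq_abs (a i), ← sq_abs (a j)]
      nlinarith [sq_nonneg (|a i| - |a j|)]
    calc _ ≤ (a i ^ 2 / 2 + a j ^ 2 / 2) * k i j := mul_le_mul_of_nonneg_right this (hk i j)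
      _ = _ := by ring
  refine h3.trans ?_
  simp_rw [sum_add_distrib, ← sum_div]
  rw [h2]
  linarith

/-- Expanding `discSum`, the pairs of different primes contribute boundedly and only the diagonal
`r = r'` depends on the length of the sum. -/
lemma abs_corr_le {χ : ℕ → ℤ} {D : ℕ} (hχ : SignChar χ D) {P : Finset ℕ}
    (hP : ∀ r ∈ P, r.Prime ∧ ¬ r ∣ D) {L X : ℕ} (hX : X ≤ L) (i i' : ℕ) :
    |∑ j ∈ Ioc 0 X, discSum χ P (i * j) * discSum χ P (i' * j)| ≤
      16 * D * (#P : ℝ) ^ 2 + ∑ r ∈ P, ∑ j ∈ Ioc 0 L, majo r (i * j) * majo r (i' * j) := by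
  have e : ∑ j ∈ Ioc 0 X, discSum χ P (i * j) * discSum χ P (i' * j) =
      ∑ r ∈ P, ∑ r' ∈ P, ∑ j ∈ Ioc 0 X, disc χ r (i * j) * disc χ r' (i' * j) := by
    unfold discSum
    simp_rw [sum_mul_sum]
    rw [sum_comm]
    refine sum_congr rfl fun r _ => ?_
    rw [sum_comm]
  rw [e]
  have hb : ∀ r ∈ P, ∀ r' ∈ P, |∑ j ∈ Ioc 0 X, disc χ r (i * j) * disc χ r' (i' * j)| ≤
      16 * D + if r = r' then ∑ j ∈ Ioc 0 L, majo r (i * j) * majo r (i' * j) else 0 := by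
    intro r hr r' hr'
    split_ifs with h
    · subst h
      have : |∑ j ∈ Ioc 0 X, disc χ r (i * j) * disc χ r (i' * j)| ≤
          ∑ j ∈ Ioc 0 L, majo r (i * j) * majo r (i' * j) := by
        refine (abs_sum_le_sum_abs _ _).trans ?_
        refine (sum_le_sum (g := fun j => majo r (i * j) * majo r (i' * j)) fun j _ => ?_).trans ?_
        · rw [abs_mul]
          exact mul_le_mul (abs_disc_le_majo hχ (hP r hr).1 _) (abs_disc_le_majo hχ (hP r hr).1 _)
            (abs_nonneg _) (majo_nonneg (hP r hr).1 _)
        · exact sum_le_sum_of_subset_of_nonneg (Ioc_subset_Ioc_right hX)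
            fun _ _ _ => mul_nonneg (majo_nonneg (hP r hr).1 _) (majo_nonneg (hP r hr).1 _)
      have : (0 : ℝ) ≤ D := Nat.cast_nonneg _
      linarith
    · rw [add_zero]
      exact abs_sum_disc_mul_le hχ (hP r hr).1 (hP r' hr').1 h (hP r hr).2 (hP r' hr').2 _ _ _
  refine (abs_sum_le_sum_abs _ _).trans ?_
  refine (sum_le_sum fun r hr => (abs_sum_le_sum_abs _ _).trans
    (sum_le_sum fun r' hr' => hb r hr r' hr')).trans (le_of_eq ?_)
  simp_rw [sum_add_distrib, sum_ite_eq]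
  rw [sum_congr rfl (g := fun r => ∑ j ∈ Ioc 0 L, majo r (i * j) * majo r (i' * j))
    (fun r hr => if_pos hr)]
  simp
  ring

/-- The dispersion bound for a bilinear sum over a dyadic block of the variable `i`. -/
lemma block_sq_le {χ : ℕ → ℤ} {D : ℕ} (hχ : SignChar χ D) {P : Finset ℕ} {R : ℝ} (hR : 0 < R)
    (hP : ∀ r ∈ P, r.Prime ∧ ¬ r ∣ D) (hPR : ∀ r ∈ P, R ≤ r) (Z I : ℕ) (hI : 0 < I)
    (a b : ℕ → ℝ) :
    (∑ i ∈ Ico I (2 * I), ∑ j ∈ Ioc 0 (Z / i), a i * b j * discSum χ P (i * j)) ^ 2 ≤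
      (∑ j ∈ Ioc 0 (Z / I), b j ^ 2) * ((16 * D * (#P : ℝ) ^ 2 * I +
        16 * #P * ((((Z / I : ℕ) : ℝ) + 1) / R + 1) * (2 * I / R + 1)) *
        ∑ i ∈ Ico I (2 * I), a i ^ 2) := by
  set s := Ico I (2 * I) with hs
  set L := Z / I with hL
  have hle : ∀ i ∈ s, Z / i ≤ L := fun i hi => Nat.div_le_div_left (mem_Ico.1 hi).1 hI
  set G : ℕ → ℝ := fun j => ∑ i ∈ s, a i * (if j ≤ Z / i then discSum χ P (i * j) else 0) with hG
  have h1 : ∑ i ∈ s, ∑ j ∈ Ioc 0 (Z / i), a i * b j * discSum χ P (i * j) =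
      ∑ j ∈ Ioc 0 L, b j * G j := by
    simp_rw [hG, mul_sum]
    rw [sum_comm]
    refine sum_congr rfl fun i hi => ?_
    rw [← sum_subset (Ioc_subset_Ioc_right (hle i hi))]
    · refine sum_congr rfl fun j hj => ?_
      rw [if_pos (mem_Ioc.1 hj).2]; ring
    · intro j hj hj'
      have : ¬ j ≤ Z / i := fun h => hj' (mem_Ioc.2 ⟨(mem_Ioc.1 hj).1, h⟩)
      simp [this]
  rw [h1]
  refine (sum_mul_sq_le_sq_mul_sq _ _ _).trans ?_
  refine mul_le_mul_of_nonneg_left ?_ (sum_nonneg fun _ _ => sq_nonneg _)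
  set k : ℕ → ℕ → ℝ := fun i i' => 16 * D * (#P : ℝ) ^ 2 +
    ∑ r ∈ P, ∑ j ∈ Ioc 0 L, majo r (i * j) * majo r (i' * j) with hk
  have h2 : ∑ j ∈ Ioc 0 L, G j ^ 2 = ∑ i ∈ s, ∑ i' ∈ s, a i * a i' *
      ∑ j ∈ Ioc 0 (min (Z / i) (Z / i')), discSum χ P (i * j) * discSum χ P (i' * j) := by
    simp_rw [hG, pow_two, sum_mul_sum]
    rw [sum_comm]
    refine sum_congr rfl fun i hi => ?_
    rw [sum_comm]
    refine sum_congr rfl fun i' hi' => ?_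
    rw [mul_sum, ← sum_subset (Ioc_subset_Ioc_right ((min_le_left _ _).trans (hle i hi)))]
    · refine sum_congr rfl fun j hj => ?_
      have := (mem_Ioc.1 hj).2
      rw [if_pos (this.trans (min_le_left _ _)), if_pos (this.trans (min_le_right _ _))]; ring
    · intro j hj hj'
      by_cases h : j ≤ Z / i
      · have : ¬ j ≤ Z / i' := fun h' => hj' (mem_Ioc.2 ⟨(mem_Ioc.1 hj).1, le_min h h'⟩)
        simp [this]
      · simp [h]
  rw [h2]
  have hk0 : ∀ i i', 0 ≤ k i i' := fun i i' => by
    refine add_nonneg (by positivity) (sum_nonneg fun r hr => sum_nonneg fun j _ => ?_)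
    exact mul_nonneg (majo_nonneg (hP r hr).1 _) (majo_nonneg (hP r hr).1 _)
  have hksymm : ∀ i i', k i i' = k i' i := fun i i' => by
    simp only [hk]; congr 1
    exact sum_congr rfl fun r _ => sum_congr rfl fun j _ => mul_comm _ _
  have h3 : ∑ i ∈ s, ∑ i' ∈ s, a i * a i' *
      ∑ j ∈ Ioc 0 (min (Z / i) (Z / i')), discSum χ P (i * j) * discSum χ P (i' * j) ≤
      ∑ i ∈ s, ∑ i' ∈ s, |a i| * |a i'| * k i i' := by
    refine sum_le_sum fun i hi => sum_le_sum fun i' hi' => (le_abs_self _).trans ?_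
    rw [abs_mul, abs_mul]
    exact mul_le_mul_of_nonneg_left
      (abs_corr_le hχ hP ((min_le_left _ _).trans (hle i hi)) i i') (by positivity)
  refine h3.trans (schur_test s k hk0 hksymm _ ?_ a)
  intro i hi
  simp_rw [hk, sum_add_distrib]
  have hcard : (#s : ℝ) = I := by
    rw [hs, Nat.card_Ico]; congr 1; omega
  have h4 : ∑ i' ∈ s, ∑ r ∈ P, ∑ j ∈ Ioc 0 L, majo r (i * j) * majo r (i' * j) =
      ∑ r ∈ P, ∑ j ∈ Ioc 0 L, majo r (i * j) * ∑ i' ∈ s, majo r (i' * j) := by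
    rw [sum_comm]
    refine sum_congr rfl fun r _ => ?_
    rw [sum_comm]
    refine sum_congr rfl fun j _ => ?_
    rw [mul_sum]
  rw [h4, sum_const, nsmul_eq_mul, hcard]
  have h5 : ∀ r ∈ P, ∑ j ∈ Ioc 0 L, majo r (i * j) * ∑ i' ∈ s, majo r (i' * j) ≤
      16 * (((L : ℝ) + 1) / R + 1) * (2 * I / R + 1) := by
    intro r hr
    have hrp := (hP r hr).1
    have hrR := hPR r hr
    have h6 : ∀ j, ∑ i' ∈ s, majo r (i' * j) ≤ 4 * (2 * I / R + 1) := by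
      intro j
      calc ∑ i' ∈ s, majo r (i' * j) ≤ ∑ i' ∈ range (2 * I), majo r (j * i') := by
            simp_rw [mul_comm j]
            refine sum_le_sum_of_subset_of_nonneg ?_ (fun _ _ _ => majo_nonneg hrp _)
            intro x hx
            exact mem_range.2 (mem_Ico.1 hx).2
        _ ≤ 4 * (((2 * I : ℕ) : ℝ) / r + 1) := sum_majo_le hrp j _
        _ ≤ _ := by push_cast; gcongr
    have h7 : ∑ j ∈ Ioc 0 L, majo r (i * j) ≤ 4 * (((L : ℝ) + 1) / R + 1) := by
      calc ∑ j ∈ Ioc 0 L, majo r (i * j) ≤ ∑ j ∈ range (L + 1), majo r (i * j) := by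
            refine sum_le_sum_of_subset_of_nonneg ?_ (fun _ _ _ => majo_nonneg hrp _)
            intro x hx
            exact mem_range.2 (Nat.lt_succ_of_le (mem_Ioc.1 hx).2)
        _ ≤ 4 * (((L + 1 : ℕ) : ℝ) / r + 1) := sum_majo_le hrp i _
        _ ≤ _ := by push_cast; gcongr
    calc _ ≤ ∑ j ∈ Ioc 0 L, majo r (i * j) * (4 * (2 * I / R + 1)) :=
          sum_le_sum fun j _ => mul_le_mul_of_nonneg_left (h6 j) (majo_nonneg hrp _)
      _ = (∑ j ∈ Ioc 0 L, majo r (i * j)) * (4 * (2 * I / R + 1)) := by rw [sum_mul]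
      _ ≤ (4 * (((L : ℝ) + 1) / R + 1)) * (4 * (2 * I / R + 1)) := by
          refine mul_le_mul_of_nonneg_right h7 (by positivity)
      _ = _ := by ring
  have h8 := sum_le_sum h5
  rw [sum_const, nsmul_eq_mul] at h8
  have : (#P : ℝ) * (16 * (((L : ℝ) + 1) / R + 1) * (2 * I / R + 1)) =
    16 * #P * (((L : ℝ) + 1) / R + 1) * (2 * I / R + 1) := by ring
  rw [this] at h8
  linarith

/-- The bilinear sum `∑ a i * b j * discSum (i j)` over the hyperbolic region `i j ≤ Z`. -/
noncomputable def bil (χ : ℕ → ℤ) (P : Finset ℕ) (Z : ℕ) (a b : ℕ → ℝ) : ℝ :=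
  ∑ i ∈ Ioc 0 Z, ∑ j ∈ Ioc 0 (Z / i), a i * b j * discSum χ P (i * j)

lemma sum_dyadic (g : ℕ → ℝ) (T : ℕ) :
    ∑ i ∈ Ico 1 (2 ^ T), g i = ∑ t ∈ range T, ∑ i ∈ Ico (2 ^ t) (2 * 2 ^ t), g i := by
  induction T with
  | zero => simp
  | succ T ih =>
    rw [sum_range_succ, ← ih, ← pow_succ']
    exact (sum_Ico_consecutive g Nat.one_le_two_pow (Nat.pow_le_pow_right (by norm_num) (by omega))).symm

/-- Type II bound: a bilinear sum whose first variable is supported on `(U, √Z]`. -/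
lemma abs_bil_le {χ : ℕ → ℤ} {D : ℕ} (hχ : SignChar χ D) {P : Finset ℕ} {R Q U : ℝ} (hR : 0 < R)
    (hP : ∀ r ∈ P, r.Prime ∧ ¬ r ∣ D) (hPR : ∀ r ∈ P, R ≤ r) {Z : ℕ} (hZ : 0 < Z)
    (hRZ : R ^ 2 ≤ Z) (hU : 0 < U) (hQ : 0 ≤ Q) (a b : ℕ → ℝ)
    (ha : ∀ i, a i ≠ 0 → U < i ∧ i * i ≤ Z)
    (haQ : ∀ I : ℕ, 0 < I → I ≤ Z → ∑ i ∈ Ico I (2 * I), a i ^ 2 ≤ Q * I)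
    (hbQ : ∀ X : ℕ, X ≤ Z → ∑ j ∈ Ioc 0 X, b j ^ 2 ≤ Q * X) :
    |bil χ P Z a b| ≤ (Nat.log 2 Z + 1) * √(16 * Q ^ 2 * Z * (D * (#P : ℝ) ^ 2 * √Z +
      6 * #P * Z / R ^ 2 + 6 * #P * Z / (U * R))) := by
  set B := 16 * Q ^ 2 * Z * (D * (#P : ℝ) ^ 2 * √Z +
      6 * #P * Z / R ^ 2 + 6 * #P * Z / (U * R)) with hB
  set T := Nat.log 2 Z + 1 with hT
  have hZT : Z < 2 ^ T := Nat.lt_pow_succ_log_self (by norm_num) Z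
  have hZ0 : (0 : ℝ) < Z := by exact_mod_cast hZ
  have hext : bil χ P Z a b = ∑ t ∈ range T, ∑ i ∈ Ico (2 ^ t) (2 * 2 ^ t),
      ∑ j ∈ Ioc 0 (Z / i), a i * b j * discSum χ P (i * j) := by
    rw [← sum_dyadic, bil]
    refine sum_subset ?_ ?_
    · intro i hi
      rw [mem_Ioc] at hi
      rw [mem_Ico]; omega
    · intro i hi hi'
      rw [mem_Ico] at hi
      rw [mem_Ioc] at hi'
      have : Z / i = 0 := Nat.div_eq_of_lt (by omega)
      simp [this]
  rw [hext]
  have hblock : ∀ t ∈ range T, |∑ i ∈ Ico (2 ^ t) (2 * 2 ^ t),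
      ∑ j ∈ Ioc 0 (Z / i), a i * b j * discSum χ P (i * j)| ≤ √B := by
    intro t _
    set I := 2 ^ t with hI
    have hI0 : 0 < I := by positivity
    have hI0' : (0 : ℝ) < I := by exact_mod_cast hI0
    by_cases hex : ∃ i ∈ Ico I (2 * I), a i ≠ 0
    · obtain ⟨i, hi, hai⟩ := hex
      obtain ⟨hUi, hii⟩ := ha i hai
      rw [mem_Ico] at hi
      have hIU : U ≤ 2 * I := by
        have : (i : ℝ) ≤ 2 * I := by exact_mod_cast hi.2.le
        linarith
      have hIIn : I * I ≤ Z := (Nat.mul_le_mul hi.1 hi.1).trans hii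
      have hII : (I : ℝ) * I ≤ Z := by exact_mod_cast hIIn
      have hIs : (I : ℝ) ≤ √Z := by
        rw [Real.le_sqrt hI0'.le hZ0.le, pow_two]; exact hII
      have hRs : R ≤ √Z := by rwa [Real.le_sqrt hR.le hZ0.le]
      have hss : √(Z : ℝ) * √Z = Z := Real.mul_self_sqrt hZ0.le
      have hRI : R * I ≤ Z := by
        calc R * I ≤ √Z * √Z := mul_le_mul hRs hIs hI0'.le (Real.sqrt_nonneg _)
          _ = Z := hss
      have hIZ : I ≤ Z := le_trans (Nat.le_mul_self I) hIIn
      have hIZ' : (I : ℝ) ≤ Z := by exact_mod_cast hIZ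
      apply Real.abs_le_sqrt
      refine (block_sq_le hχ hR hP hPR Z I hI0 a b).trans ?_
      have hL : ((Z / I : ℕ) : ℝ) ≤ Z / I := Nat.cast_div_le
      have h1 : (((Z / I : ℕ) : ℝ) + 1) / R + 1 ≤ 3 * Z / (I * R) := by
        have e1 : (1 : ℝ) ≤ Z / I := by rw [le_div_iff₀ hI0']; linarith
        have e2 : (1 : ℝ) ≤ Z / (I * R) := by rw [le_div_iff₀ (by positivity)]; linarith
        calc (((Z / I : ℕ) : ℝ) + 1) / R + 1 ≤ (Z / I + Z / I) / R + Z / (I * R) := by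
              gcongr
          _ = 3 * Z / (I * R) := by field_simp; ring
      have h2 : 3 * Z / (I * R) * (2 * I / R + 1) ≤ 6 * Z / R ^ 2 + 6 * Z / (U * R) := by
        have : 3 * (Z : ℝ) / (I * R) ≤ 6 * Z / (U * R) := by
          rw [div_le_div_iff₀ (by positivity) (by positivity)]
          have : 0 ≤ 3 * (Z : ℝ) * R := by positivity
          nlinarith
        calc 3 * Z / (I * R) * (2 * I / R + 1) = 6 * Z / R ^ 2 + 3 * Z / (I * R) := by
              field_simp; ring
          _ ≤ _ := by linarith
      have h3 : 16 * D * (#P : ℝ) ^ 2 * I +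
        16 * #P * ((((Z / I : ℕ) : ℝ) + 1) / R + 1) * (2 * I / R + 1) ≤
          16 * (D * (#P : ℝ) ^ 2 * √Z + 6 * #P * Z / R ^ 2 + 6 * #P * Z / (U * R)) := by
        calc _ ≤ 16 * D * (#P : ℝ) ^ 2 * √Z +
              16 * #P * (3 * Z / (I * R) * (2 * I / R + 1)) := by
              rw [mul_assoc (16 * (#P : ℝ))]
              gcongr
          _ ≤ 16 * D * (#P : ℝ) ^ 2 * √Z +
              16 * #P * (6 * Z / R ^ 2 + 6 * Z / (U * R)) := by gcongr
          _ = _ := by ring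
      have hb' : ∑ j ∈ Ioc 0 (Z / I), b j ^ 2 ≤ Q * (Z / I) :=
        (hbQ _ (Nat.div_le_self _ _)).trans (mul_le_mul_of_nonneg_left hL hQ)
      calc _ ≤ Q * (Z / I) * (16 * (D * (#P : ℝ) ^ 2 * √Z +
            6 * #P * Z / R ^ 2 + 6 * #P * Z / (U * R)) * (Q * I)) := by
            refine mul_le_mul hb' (mul_le_mul h3 (haQ I hI0 hIZ) (sum_nonneg fun _ _ => sq_nonneg _)
              (by positivity)) (mul_nonneg (by positivity) (sum_nonneg fun _ _ => sq_nonneg _))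
              (by positivity)
        _ = B := by rw [hB]; field_simp
    · push Not at hex
      have : ∑ i ∈ Ico I (2 * I), ∑ j ∈ Ioc 0 (Z / i), a i * b j * discSum χ P (i * j) = 0 := by
        refine sum_eq_zero fun i hi => sum_eq_zero fun j _ => ?_
        rw [hex i hi]; ring
      rw [this, abs_zero]
      exact Real.sqrt_nonneg _
  refine (abs_sum_le_sum_abs _ _).trans ((sum_le_sum hblock).trans (le_of_eq ?_))
  rw [sum_const, card_range, nsmul_eq_mul, hT]
  push_cast
  ring

/-! ### The mean square of the divisor function -/

lemma sum_inv_le (X : ℕ) : ∑ d ∈ Ioc 0 X, (1 : ℝ) / d ≤ 1 + Real.log X := by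
  have h := harmonic_le_one_add_log X
  refine le_trans (le_of_eq ?_) h
  rw [harmonic_eq_sum_Icc]
  push_cast
  refine sum_congr ?_ fun d _ => by simp
  ext; simp [Nat.lt_iff_add_one_le]

lemma sum_inv_dvd_le (X g : ℕ) (hg : 0 < g) :
    ∑ d ∈ Ioc 0 X, (if g ∣ d then (1 : ℝ) / d else 0) ≤ (1 + Real.log X) / g := by
  rw [← sum_filter]
  have h : ∑ d ∈ (Ioc 0 X).filter (g ∣ ·), (1 : ℝ) / d ≤ ∑ d ∈ Ioc 0 X, (1 : ℝ) / ((g * d : ℕ)) := by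
    refine (sum_le_sum_of_subset_of_nonneg (t := (Ioc 0 X).image (g * ·)) ?_ ?_).trans ?_
    · intro d hd
      rw [mem_filter, mem_Ioc] at hd
      obtain ⟨⟨h1, h2⟩, c, rfl⟩ := hd
      refine mem_image.2 ⟨c, mem_Ioc.2 ⟨Nat.pos_of_mul_pos_left h1, ?_⟩, rfl⟩
      exact le_trans (Nat.le_mul_of_pos_left c hg) h2
    · intros; positivity
    · rw [sum_image]
      intro x _ y _ h
      exact Nat.eq_of_mul_eq_mul_left hg h
  refine h.trans ?_
  have : ∀ d ∈ Ioc 0 X, (1 : ℝ) / ((g * d : ℕ)) = 1 / g * (1 / d) := by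
    intro d _; push_cast; rw [one_div_mul_one_div]
  rw [sum_congr rfl this, ← mul_sum]
  have hg' : (0 : ℝ) < g := by exact_mod_cast hg
  calc _ ≤ 1 / (g : ℝ) * (1 + Real.log X) :=
        mul_le_mul_of_nonneg_left (sum_inv_le X) (by positivity)
    _ = _ := by ring

/-- The bound comes from writing the sum as one over pairs `d, e` of divisors, with
`1 / lcm d e = gcd d e / (d e)`, and majorizing `gcd d e` by the sum of all common divisors. -/
lemma sum_card_divisors_sq_le (X : ℕ) :
    ∑ n ∈ Ioc 0 X, (#n.divisors : ℝ) ^ 2 ≤ X * (1 + Real.log X) ^ 3 := by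
  have hlog : 0 ≤ Real.log X := Real.log_natCast_nonneg X
  have h1 : ∀ n ∈ Ioc 0 X, (#n.divisors : ℝ) = ∑ d ∈ Ioc 0 X, if d ∣ n then (1 : ℝ) else 0 := by
    intro n hn
    rw [mem_Ioc] at hn
    rw [← sum_filter, sum_const, nsmul_eq_mul, mul_one]
    congr 2
    ext d
    simp only [Nat.mem_divisors, mem_filter, mem_Ioc]
    constructor
    · rintro ⟨hd, -⟩
      exact ⟨⟨Nat.pos_of_dvd_of_pos hd hn.1, (Nat.le_of_dvd hn.1 hd).trans hn.2⟩, hd⟩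
    · rintro ⟨-, hd⟩
      exact ⟨hd, by omega⟩
  have h2 : ∑ n ∈ Ioc 0 X, (#n.divisors : ℝ) ^ 2 = ∑ d ∈ Ioc 0 X, ∑ e ∈ Ioc 0 X,
      ∑ n ∈ Ioc 0 X, (if d ∣ n then (1 : ℝ) else 0) * (if e ∣ n then (1 : ℝ) else 0) := by
    rw [sum_congr rfl fun n hn => by rw [h1 n hn, pow_two, sum_mul_sum]]
    rw [sum_comm]
    refine sum_congr rfl fun d _ => ?_
    rw [sum_comm]
  have h3 : ∀ d ∈ Ioc 0 X, ∀ e ∈ Ioc 0 X,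
      ∑ n ∈ Ioc 0 X, (if d ∣ n then (1 : ℝ) else 0) * (if e ∣ n then (1 : ℝ) else 0) ≤
      X * ∑ g ∈ Ioc 0 X, g * ((if g ∣ d then (1 : ℝ) / d else 0) * (if g ∣ e then (1 : ℝ) / e else 0)) := by
    intro d hd e he
    rw [mem_Ioc] at hd he
    have hd0 : (0 : ℝ) < d := by exact_mod_cast hd.1
    have he0 : (0 : ℝ) < e := by exact_mod_cast he.1
    have a1 : ∑ n ∈ Ioc 0 X, (if d ∣ n then (1 : ℝ) else 0) * (if e ∣ n then (1 : ℝ) else 0) =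
        ((X / Nat.lcm d e : ℕ) : ℝ) := by
      rw [← Nat.Ioc_filter_dvd_card_eq_div, card_eq_sum_ones, Nat.cast_sum, sum_filter]
      refine sum_congr rfl fun n _ => ?_
      by_cases h1 : d ∣ n <;> by_cases h2 : e ∣ n <;> simp [h1, h2, Nat.lcm_dvd_iff]
    have a2 : ((X / Nat.lcm d e : ℕ) : ℝ) ≤ X * (Nat.gcd d e * (1 / d * (1 / e))) := by
      refine Nat.cast_div_le.trans (le_of_eq ?_)
      have hl : (0 : ℝ) < Nat.lcm d e := by exact_mod_cast Nat.lcm_pos hd.1 he.1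
      have hg : (Nat.gcd d e : ℝ) * Nat.lcm d e = d * e := by exact_mod_cast Nat.gcd_mul_lcm d e
      rw [one_div_mul_one_div, ← hg]
      have hgp : (0 : ℝ) < Nat.gcd d e := by exact_mod_cast Nat.gcd_pos_of_pos_left e hd.1
      field_simp
    rw [a1]
    refine a2.trans (mul_le_mul_of_nonneg_left ?_ (Nat.cast_nonneg _))
    have hmem : Nat.gcd d e ∈ Ioc 0 X :=
      mem_Ioc.2 ⟨Nat.gcd_pos_of_pos_left e hd.1, (Nat.le_of_dvd hd.1 (Nat.gcd_dvd_left d e)).trans hd.2⟩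
    refine le_trans (le_of_eq ?_) (single_le_sum (f := fun g : ℕ => (g : ℝ) * ((if g ∣ d then (1 : ℝ) / d else 0) *
      (if g ∣ e then (1 : ℝ) / e else 0))) (fun g _ => ?_) hmem)
    · simp [Nat.gcd_dvd_left, Nat.gcd_dvd_right]
    · split_ifs <;> positivity
  rw [h2]
  refine (sum_le_sum fun d hd => sum_le_sum fun e he => h3 d hd e he).trans ?_
  simp_rw [← mul_sum]
  refine mul_le_mul_of_nonneg_left ?_ (Nat.cast_nonneg _)
  have h4 : ∑ d ∈ Ioc 0 X, ∑ e ∈ Ioc 0 X, ∑ g ∈ Ioc 0 X, (g : ℝ) *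
      ((if g ∣ d then (1 : ℝ) / d else 0) * (if g ∣ e then (1 : ℝ) / e else 0)) =
      ∑ g ∈ Ioc 0 X, (g : ℝ) * (∑ d ∈ Ioc 0 X, (if g ∣ d then (1 : ℝ) / d else 0)) ^ 2 := by
    simp_rw [pow_two, sum_mul_sum, mul_sum]
    rw [sum_congr rfl fun d _ => sum_comm, sum_comm]
  rw [h4]
  calc _ ≤ ∑ g ∈ Ioc 0 X, (g : ℝ) * ((1 + Real.log X) / g) ^ 2 := by
        refine sum_le_sum fun g hg => ?_
        gcongr
        exact sum_inv_dvd_le X g (mem_Ioc.1 hg).1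
    _ = ∑ g ∈ Ioc 0 X, (1 + Real.log X) ^ 2 * (1 / g) := by
        refine sum_congr rfl fun g hg => ?_
        have : (g : ℝ) ≠ 0 := by have := (mem_Ioc.1 hg).1; positivity
        field_simp
    _ ≤ (1 + Real.log X) ^ 2 * (1 + Real.log X) := by
        rw [← mul_sum]; exact mul_le_mul_of_nonneg_left (sum_inv_le X) (by positivity)
    _ = _ := by ring

/-! ### Vaughan's identity -/

/-- The restriction of an arithmetic function to arguments at most `W`. -/
def trunc (f : ArithmeticFunction ℝ) (W : ℕ) : ArithmeticFunction ℝ :=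
  ⟨fun n => if n ≤ W then f n else 0, by simp⟩

lemma trunc_apply (f : ArithmeticFunction ℝ) (W n : ℕ) :
    trunc f W n = if n ≤ W then f n else 0 := rfl

open ArithmeticFunction ArithmeticFunction.Moebius ArithmeticFunction.zeta in
/-- Vaughan's identity with both cutoffs equal to `W`, as an identity of Dirichlet convolutions. -/
lemma vaughan_identity (W : ℕ) :
    (Λ : ArithmeticFunction ℝ) = trunc Λ W + trunc (μ : ArithmeticFunction ℝ) W * log
      - (trunc Λ W * trunc (μ : ArithmeticFunction ℝ) W) * (ζ : ArithmeticFunction ℝ)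
      + (Λ - trunc Λ W) * (((μ : ArithmeticFunction ℝ) - trunc (μ : ArithmeticFunction ℝ) W) *
        (ζ : ArithmeticFunction ℝ)) := by
  have h1 : Λ * (ζ : ArithmeticFunction ℝ) = log := vonMangoldt_mul_zeta
  have h2 : (μ : ArithmeticFunction ℝ) * (ζ : ArithmeticFunction ℝ) = 1 :=
    coe_moebius_mul_coe_zeta
  rw [← h1]
  linear_combination (trunc Λ W - Λ) * h2

lemma sum_mul_discSum (χ : ℕ → ℤ) (P : Finset ℕ) (Z : ℕ) (f g : ArithmeticFunction ℝ) :
    ∑ n ∈ Ioc 0 Z, (f * g) n * discSum χ P n = bil χ P Z f g := by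
  have h1 : ∑ n ∈ Ioc 0 Z, (f * g) n * discSum χ P n =
      ∑ x ∈ Ioc 0 Z ×ˢ Ioc 0 Z with x.1 * x.2 ≤ Z, f x.1 * g x.2 * discSum χ P (x.1 * x.2) := by
    have : ∀ n ∈ Ioc 0 Z, (f * g) n * discSum χ P n = ∑ x ∈ Ioc 0 Z ×ˢ Ioc 0 Z with x.1 * x.2 = n,
        f x.1 * g x.2 * discSum χ P (x.1 * x.2) := by
      intro n hn
      rw [mem_Ioc] at hn
      rw [ArithmeticFunction.mul_apply, Nat.divisorsAntidiagonal_eq_prod_filter_of_le hn.1.ne' hn.2,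
        sum_mul]
      refine sum_congr rfl fun x hx => ?_
      rw [(mem_filter.1 hx).2]
    rw [sum_congr rfl this, sum_filter, sum_comm' (t' := Ioc 0 Z ×ˢ Ioc 0 Z)
      (s' := fun x => (Ioc 0 Z).filter fun n => x.1 * x.2 = n)]
    · refine sum_congr rfl fun x hx => ?_
      rw [mem_product, mem_Ioc, mem_Ioc] at hx
      rw [sum_const]
      have h0 : 0 < x.1 * x.2 := Nat.mul_pos hx.1.1 hx.2.1
      split_ifs with h
      · rw [Finset.filter_eq, if_pos (mem_Ioc.2 ⟨h0, h⟩), card_singleton, one_smul]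
      · rw [Finset.filter_eq, if_neg (by simp [h]), card_empty, zero_smul]
    · intro x y; simp only [mem_filter, mem_product]; tauto
  rw [h1, sum_filter, sum_product]
  unfold bil
  refine sum_congr rfl fun i hi => ?_
  rw [mem_Ioc] at hi
  rw [← sum_filter]
  refine sum_congr ?_ fun _ _ => rfl
  ext j
  simp only [mem_filter, mem_Ioc, Nat.le_div_iff_mul_le hi.1, mul_comm j]
  constructor
  · rintro ⟨⟨h, _⟩, h'⟩; exact ⟨h, h'⟩
  · rintro ⟨h, h'⟩; exact ⟨⟨h, (Nat.le_mul_of_pos_left j hi.1).trans h'⟩, h'⟩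

lemma abs_discSum_le (χ : ℕ → ℤ) {P : Finset ℕ} (hP : ∀ r ∈ P, r.Prime) (n : ℕ) :
    |discSum χ P n| ≤ #P := by
  unfold discSum
  refine (abs_sum_le_sum_abs _ _).trans ((sum_le_sum fun r hr => abs_disc_le_one χ (hP r hr) n).trans ?_)
  simp

lemma abs_sum_discSum_le {χ : ℕ → ℤ} {D : ℕ} (hχ : SignChar χ D) {P : Finset ℕ}
    (hP : ∀ r ∈ P, r.Prime ∧ ¬ r ∣ D) (m X : ℕ) :
    |∑ k ∈ Ioc 0 X, discSum χ P (m * k)| ≤ 4 * D * #P := by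
  unfold discSum
  rw [sum_comm]
  refine (abs_sum_le_sum_abs _ _).trans ((sum_le_sum fun r hr =>
    abs_sum_disc_le hχ (hP r hr).1 (hP r hr).2 m X).trans ?_)
  rw [sum_const, nsmul_eq_mul, mul_comm]

/-- Partial summation: a monotone nonnegative weight costs a factor of at most twice its last
value. -/
lemma abs_sum_mono_mul_le (w g : ℕ → ℝ) (hw : Monotone w) (hw0 : ∀ n, 0 ≤ w n) (B : ℝ)
    (hB : ∀ X, |∑ k ∈ Ioc 0 X, g k| ≤ B) (X : ℕ) :
    |∑ k ∈ Ioc 0 X, w k * g k| ≤ 2 * w X * B := by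
  have hB0 : 0 ≤ B := (abs_nonneg _).trans (hB 0)
  have key : ∀ X, |∑ k ∈ Ioc 0 X, w k * g k - w X * ∑ k ∈ Ioc 0 X, g k| ≤ w X * B := by
    intro X
    induction X with
    | zero => simpa using mul_nonneg (hw0 0) hB0
    | succ X ih =>
      rw [sum_Ioc_succ_top (Nat.zero_le X), sum_Ioc_succ_top (Nat.zero_le X)]
      have e : ∑ k ∈ Ioc 0 X, w k * g k + w (X + 1) * g (X + 1) -
          w (X + 1) * (∑ k ∈ Ioc 0 X, g k + g (X + 1)) =
          (∑ k ∈ Ioc 0 X, w k * g k - w X * ∑ k ∈ Ioc 0 X, g k) -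
          (w (X + 1) - w X) * ∑ k ∈ Ioc 0 X, g k := by ring
      rw [e]
      refine (abs_sub _ _).trans ?_
      rw [abs_mul, abs_of_nonneg (sub_nonneg.2 (hw (Nat.le_succ X)))]
      have := mul_le_mul_of_nonneg_left (hB X) (sub_nonneg.2 (hw (Nat.le_succ X)))
      linarith
  have h1 := key X
  have h2 : |w X * ∑ k ∈ Ioc 0 X, g k| ≤ w X * B := by
    rw [abs_mul, abs_of_nonneg (hw0 X)]
    exact mul_le_mul_of_nonneg_left (hB X) (hw0 X)
  calc _ = |(∑ k ∈ Ioc 0 X, w k * g k - w X * ∑ k ∈ Ioc 0 X, g k) +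
        w X * ∑ k ∈ Ioc 0 X, g k| := by ring_nf
    _ ≤ _ := (abs_add_le _ _).trans (by linarith)

/-- Type I bound: if the second weight is smooth enough that all inner sums are at most `B`, and the
first is bounded by `A` and supported on `[1, N]`, the bilinear sum is at most `A * B * N`. -/
lemma abs_bil_le_typeI (χ : ℕ → ℤ) (P : Finset ℕ) (Z N : ℕ) (a b : ℕ → ℝ) (A B : ℝ)
    (hA0 : 0 ≤ A) (hB0 : 0 ≤ B)
    (hA : ∀ i ∈ Ioc 0 Z, |a i| ≤ A) (ha : ∀ i, N < i → a i = 0)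
    (hB : ∀ i ∈ Ioc 0 Z, |∑ j ∈ Ioc 0 (Z / i), b j * discSum χ P (i * j)| ≤ B) :
    |bil χ P Z a b| ≤ A * B * N := by
  unfold bil
  have h : ∀ i ∈ Ioc 0 Z, |∑ j ∈ Ioc 0 (Z / i), a i * b j * discSum χ P (i * j)| ≤
      if i ≤ N then A * B else 0 := by
    intro i hi
    simp_rw [mul_assoc]
    rw [← mul_sum, abs_mul]
    split_ifs with hN
    · exact mul_le_mul (hA i hi) (hB i hi) (abs_nonneg _) hA0
    · rw [ha i (not_le.1 hN)]; simp
  refine (abs_sum_le_sum_abs _ _).trans ((sum_le_sum h).trans ?_)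
  rw [← sum_filter, sum_const, nsmul_eq_mul, mul_comm]
  refine mul_le_mul_of_nonneg_left ?_ (mul_nonneg hA0 hB0)
  have : #((Ioc 0 Z).filter (· ≤ N)) ≤ #(Ioc 0 N) := card_le_card fun i hi => by
    rw [mem_filter, mem_Ioc] at hi; exact mem_Ioc.2 ⟨hi.1.1, hi.2⟩
  rw [Nat.card_Ioc, Nat.sub_zero] at this
  exact_mod_cast this

/-! ### The discrepancy on primes -/

section Vaughan

open ArithmeticFunction ArithmeticFunction.Moebius ArithmeticFunction.zeta

lemma abs_vonMangoldt_sub_trunc_le (W n : ℕ) : |(Λ - trunc Λ W) n| ≤ Real.log n := by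
  have h1 : (Λ - trunc Λ W) n = Λ n - trunc Λ W n := rfl
  rw [h1, trunc_apply]
  split_ifs
  · simpa using Real.log_natCast_nonneg n
  · rw [sub_zero, abs_of_nonneg vonMangoldt_nonneg]; exact vonMangoldt_le_log

lemma abs_trunc_mul_le (W n : ℕ) :
    |(trunc Λ W * trunc (μ : ArithmeticFunction ℝ) W) n| ≤ Real.log n := by
  rw [mul_apply, ← vonMangoldt_sum, ← Nat.sum_divisorsAntidiagonal (n := n) (fun i _ => Λ i)]
  refine (abs_sum_le_sum_abs _ _).trans (sum_le_sum fun x _ => ?_)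
  rw [abs_mul]
  have h1 : |trunc Λ W x.1| ≤ Λ x.1 := by
    rw [trunc_apply]
    split_ifs
    · rw [abs_of_nonneg vonMangoldt_nonneg]
    · simp
  have h2 : |trunc (μ : ArithmeticFunction ℝ) W x.2| ≤ 1 := by
    rw [trunc_apply]
    split_ifs
    · have : |μ x.2| ≤ 1 := abs_moebius_le_one
      rw [intCoe_apply]
      exact_mod_cast this
    · simp
  calc _ ≤ Λ x.1 * 1 := mul_le_mul h1 h2 (abs_nonneg _) vonMangoldt_nonneg
    _ = _ := mul_one _

lemma trunc_mul_eq_zero (W n : ℕ) (h : W * W < n) :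
    (trunc Λ W * trunc (μ : ArithmeticFunction ℝ) W) n = 0 := by
  rw [mul_apply]
  refine sum_eq_zero fun x hx => ?_
  rw [Nat.mem_divisorsAntidiagonal] at hx
  rw [trunc_apply, trunc_apply]
  by_cases h1 : x.1 ≤ W
  · by_cases h2 : x.2 ≤ W
    · have := Nat.mul_le_mul h1 h2
      omega
    · simp [h2]
  · simp [h1]

lemma abs_sub_trunc_mul_zeta_le (W n : ℕ) :
    |(((μ : ArithmeticFunction ℝ) - trunc (μ : ArithmeticFunction ℝ) W) *
      (ζ : ArithmeticFunction ℝ)) n| ≤ #n.divisors := by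
  rw [coe_mul_zeta_apply]
  refine (abs_sum_le_sum_abs _ _).trans ?_
  rw [card_eq_sum_ones, Nat.cast_sum]
  refine sum_le_sum fun d _ => ?_
  have h1 : ((μ : ArithmeticFunction ℝ) - trunc (μ : ArithmeticFunction ℝ) W) d =
    (μ : ArithmeticFunction ℝ) d - trunc (μ : ArithmeticFunction ℝ) W d := rfl
  rw [h1, trunc_apply]
  split_ifs
  · simp
  · have : |μ d| ≤ 1 := abs_moebius_le_one
    rw [intCoe_apply, sub_zero]
    exact_mod_cast this

lemma sub_trunc_mul_zeta_eq_zero (W n : ℕ) (h : n ≤ W) :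
    (((μ : ArithmeticFunction ℝ) - trunc (μ : ArithmeticFunction ℝ) W) *
      (ζ : ArithmeticFunction ℝ)) n = 0 := by
  rw [coe_mul_zeta_apply]
  refine sum_eq_zero fun d hd => ?_
  have h1 : ((μ : ArithmeticFunction ℝ) - trunc (μ : ArithmeticFunction ℝ) W) d =
    (μ : ArithmeticFunction ℝ) d - trunc (μ : ArithmeticFunction ℝ) W d := rfl
  rw [h1, trunc_apply, if_pos ((Nat.divisor_le hd).trans h), sub_self]

lemma bil_add (χ : ℕ → ℤ) (P : Finset ℕ) (Z : ℕ) (a a' b : ℕ → ℝ) :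
    bil χ P Z (fun n => a n + a' n) b = bil χ P Z a b + bil χ P Z a' b := by
  unfold bil
  simp_rw [← sum_add_distrib, add_mul]

lemma bil_comm (χ : ℕ → ℤ) (P : Finset ℕ) (Z : ℕ) (a b : ArithmeticFunction ℝ) :
    bil χ P Z a b = bil χ P Z b a := by
  rw [← sum_mul_discSum, ← sum_mul_discSum, mul_comm]

/-- The Type II part of Vaughan's identity, split according to which of the two variables is at most
`√Z`. -/
lemma abs_bil_typeII_le {χ : ℕ → ℤ} {D : ℕ} (hχ : SignChar χ D) {P : Finset ℕ} {R : ℝ} (hR : 0 < R)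
    (hP : ∀ r ∈ P, r.Prime ∧ ¬ r ∣ D) (hPR : ∀ r ∈ P, R ≤ r) {Z W : ℕ} (hZ : 0 < Z)
    (hRZ : R ^ 2 ≤ Z) (hW : 0 < W) (a b : ArithmeticFunction ℝ)
    (ha : ∀ n, |a n| ≤ Real.log n) (ha0 : ∀ n ≤ W, a n = 0)
    (hb : ∀ n, |b n| ≤ #n.divisors) (hb0 : ∀ n ≤ W, b n = 0) :
    |bil χ P Z a b| ≤ 2 * ((Nat.log 2 Z + 1) *
      √(16 * (2 * (1 + Real.log (2 * Z)) ^ 3) ^ 2 * Z * (D * (#P : ℝ) ^ 2 * √Z +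
      6 * #P * Z / R ^ 2 + 6 * #P * Z / (W * R)))) := by
  set L := Real.log (2 * Z) with hL
  have hZ1 : (1 : ℝ) ≤ Z := by exact_mod_cast hZ
  have hL0 : 0 ≤ L := Real.log_nonneg (by linarith)
  set Q := 2 * (1 + L) ^ 3 with hQ
  have hQ0 : 0 ≤ Q := by positivity
  have hLQ : L ^ 2 ≤ Q := by nlinarith [pow_nonneg hL0 3, pow_nonneg hL0 2]
  have hlog : ∀ n : ℕ, n ≤ 2 * Z → Real.log n ≤ L := by
    intro n hn
    rcases Nat.eq_zero_or_pos n with rfl | h0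
    · simpa using hL0
    · exact Real.log_le_log (by exact_mod_cast h0) (by exact_mod_cast hn)
  have ha2 : ∀ n : ℕ, n ≤ 2 * Z → (a n) ^ 2 ≤ L ^ 2 := fun n hn =>
    sq_le_sq' (by have := abs_le.1 ((ha n).trans (hlog n hn)); exact this.1)
      (by have := abs_le.1 ((ha n).trans (hlog n hn)); exact this.2)
  have hbs : ∀ X : ℕ, X ≤ 2 * Z → ∑ j ∈ Ioc 0 X, b j ^ 2 ≤ Q / 2 * X := by
    intro X hX
    refine (sum_le_sum fun j _ => ?_).trans ((sum_card_divisors_sq_le X).trans ?_)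
    · rw [← sq_abs]; exact pow_le_pow_left₀ (abs_nonneg _) (hb j) 2
    · have h1 : 0 ≤ Real.log X := Real.log_natCast_nonneg X
      have : (1 + Real.log X) ^ 3 ≤ (1 + L) ^ 3 := by
        gcongr; exact hlog X hX
      rw [mul_comm]
      have h3 : Q / 2 = (1 + L) ^ 3 := by rw [hQ]; ring
      rw [h3]
      exact mul_le_mul_of_nonneg_right this (Nat.cast_nonneg _)
  have has : ∀ X : ℕ, X ≤ 2 * Z → ∑ j ∈ Ioc 0 X, a j ^ 2 ≤ L ^ 2 * X := by
    intro X hX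
    refine (sum_le_sum fun j hj => ha2 j ((mem_Ioc.1 hj).2.trans hX)).trans ?_
    simp [mul_comm]
  -- the small and the large part of `a`, and the small part of `b`
  let a1 : ℕ → ℝ := fun n => if n * n ≤ Z then a n else 0
  let a2 : ArithmeticFunction ℝ := ⟨fun n => if n * n ≤ Z then 0 else a n, by simp⟩
  let b1 : ℕ → ℝ := fun n => if n * n ≤ Z then b n else 0
  have e1 : bil χ P Z a b = bil χ P Z a1 b + bil χ P Z a2 b := by
    rw [← bil_add]
    congr 1
    ext n
    change a n = (if n * n ≤ Z then a n else 0) + (if n * n ≤ Z then 0 else a n)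
    split_ifs <;> simp
  have e2 : bil χ P Z a2 b = bil χ P Z b1 a2 := by
    rw [bil_comm]
    unfold bil
    refine sum_congr rfl fun i hi => sum_congr rfl fun j hj => ?_
    rw [mem_Ioc] at hi hj
    change b i * (if j * j ≤ Z then 0 else a j) * _ =
      (if i * i ≤ Z then b i else 0) * (if j * j ≤ Z then 0 else a j) * _
    by_cases h : j * j ≤ Z
    · simp [h]
    · have hji := (Nat.le_div_iff_mul_le hi.1).1 hj.2
      have : i * i ≤ Z := by nlinarith
      simp [h, this]
  have hIco : ∀ (f : ℕ → ℝ) (I : ℕ), 0 < I →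
      ∑ i ∈ Ico I (2 * I), f i ^ 2 ≤ ∑ i ∈ Ioc 0 (2 * I), f i ^ 2 := fun f I hI =>
    sum_le_sum_of_subset_of_nonneg (fun i hi => by
      rw [mem_Ico] at hi; exact mem_Ioc.2 ⟨by omega, by omega⟩) fun _ _ _ => sq_nonneg _
  have hW' : (0 : ℝ) < W := by exact_mod_cast hW
  have B1 := abs_bil_le hχ hR hP hPR hZ hRZ hW' hQ0 a1 b
    (by
      intro i hi
      change (if i * i ≤ Z then a i else 0) ≠ 0 at hi
      split_ifs at hi with h
      · refine ⟨?_, h⟩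
        by_contra hc
        exact hi (ha0 i (by exact_mod_cast not_lt.1 hc))
      · exact absurd rfl hi)
    (by
      intro I hI hIZ
      calc ∑ i ∈ Ico I (2 * I), a1 i ^ 2 ≤ ∑ i ∈ Ico I (2 * I), L ^ 2 := by
            refine sum_le_sum fun i hi => ?_
            rw [mem_Ico] at hi
            change (if i * i ≤ Z then a i else 0) ^ 2 ≤ L ^ 2
            split_ifs with h
            · exact ha2 i (by omega)
            · simpa using sq_nonneg L
        _ = L ^ 2 * I := by
            rw [sum_const, Nat.card_Ico, nsmul_eq_mul, mul_comm]
            congr 2; omega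
        _ ≤ Q * I := mul_le_mul_of_nonneg_right hLQ (Nat.cast_nonneg _))
    (fun X hX => (hbs X (by omega)).trans
      (mul_le_mul_of_nonneg_right (by linarith) (Nat.cast_nonneg _)))
  have B2 := abs_bil_le hχ hR hP hPR hZ hRZ hW' hQ0 b1 a2
    (by
      intro i hi
      change (if i * i ≤ Z then b i else 0) ≠ 0 at hi
      split_ifs at hi with h
      · refine ⟨?_, h⟩
        by_contra hc
        exact hi (hb0 i (by exact_mod_cast not_lt.1 hc))
      · exact absurd rfl hi)
    (by
      intro I hI hIZ
      calc ∑ i ∈ Ico I (2 * I), b1 i ^ 2 ≤ ∑ i ∈ Ico I (2 * I), b i ^ 2 := by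
            refine sum_le_sum fun i hi => ?_
            change (if i * i ≤ Z then b i else 0) ^ 2 ≤ b i ^ 2
            split_ifs with h
            · exact le_rfl
            · simpa using sq_nonneg (b i)
        _ ≤ Q / 2 * (2 * I : ℕ) := (hIco _ I hI).trans (hbs _ (by omega))
        _ = Q * I := by push_cast; ring)
    (by
      intro X hX
      calc ∑ i ∈ Ioc 0 X, a2 i ^ 2 ≤ ∑ i ∈ Ioc 0 X, a i ^ 2 := by
            refine sum_le_sum fun i hi => ?_
            change (if i * i ≤ Z then 0 else a i) ^ 2 ≤ a i ^ 2
            split_ifs with h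
            · simpa using sq_nonneg (a i)
            · exact le_rfl
        _ ≤ L ^ 2 * X := has X (by omega)
        _ ≤ Q * X := mul_le_mul_of_nonneg_right hLQ (Nat.cast_nonneg _))
  rw [e1, e2, two_mul]
  exact (abs_add_le _ _).trans (add_le_add B1 B2)

/-- The discrepancy summed over prime powers up to `Z` with von Mangoldt weights: Vaughan's identity
with cutoff `W` gives Type I sums, the first term on the right, and a Type II sum, the second. -/
theorem abs_sum_vonMangoldt_disc_le {χ : ℕ → ℤ} {D : ℕ} (hχ : SignChar χ D) {P : Finset ℕ} {R : ℝ}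
    (hR : 0 < R) (hP : ∀ r ∈ P, r.Prime ∧ ¬ r ∣ D) (hPR : ∀ r ∈ P, R ≤ r) {Z W : ℕ} (hZ : 0 < Z)
    (hRZ : R ^ 2 ≤ Z) (hW : 0 < W) :
    |∑ n ∈ Ioc 0 Z, Λ n * discSum χ P n| ≤ 13 * D * #P * (W : ℝ) ^ 2 * Real.log Z +
      2 * ((Nat.log 2 Z + 1) *
      √(16 * (2 * (1 + Real.log (2 * Z)) ^ 3) ^ 2 * Z * (D * (#P : ℝ) ^ 2 * √Z +
      6 * #P * Z / R ^ 2 + 6 * #P * Z / (W * R)))) := by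
  set E := 2 * ((Nat.log 2 Z + 1) *
      √(16 * (2 * (1 + Real.log (2 * Z)) ^ 3) ^ 2 * Z * (D * (#P : ℝ) ^ 2 * √Z +
      6 * #P * Z / R ^ 2 + 6 * #P * Z / (W * R)))) with hE
  set F := trunc Λ W with hF
  set G := trunc (μ : ArithmeticFunction ℝ) W with hG
  set L := Real.log Z with hL
  have hL0 : 0 ≤ L := Real.log_natCast_nonneg Z
  have hD1 : (1 : ℝ) ≤ D := by exact_mod_cast hχ.pos
  have hW1 : (1 : ℝ) ≤ W := by exact_mod_cast hW
  have hK0 : (0 : ℝ) ≤ #P := Nat.cast_nonneg _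
  have hlog : ∀ n ∈ Ioc 0 Z, Real.log n ≤ L := by
    intro n hn
    rw [mem_Ioc] at hn
    exact Real.log_le_log (by exact_mod_cast hn.1) (by exact_mod_cast hn.2)
  have split : ∑ n ∈ Ioc 0 Z, Λ n * discSum χ P n = ∑ n ∈ Ioc 0 Z, F n * discSum χ P n +
      bil χ P Z G log - bil χ P Z (F * G : ArithmeticFunction ℝ) (ζ : ArithmeticFunction ℝ) +
      bil χ P Z (Λ - F : ArithmeticFunction ℝ) (((μ : ArithmeticFunction ℝ) - G) *
        (ζ : ArithmeticFunction ℝ) : ArithmeticFunction ℝ) := by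
    rw [← sum_mul_discSum, ← sum_mul_discSum, ← sum_mul_discSum, ← sum_add_distrib,
      ← sum_sub_distrib, ← sum_add_distrib]
    refine sum_congr rfl fun n _ => ?_
    have := congrArg (fun f : ArithmeticFunction ℝ => f n * discSum χ P n) (vaughan_identity W)
    refine this.trans ?_
    have e : ∀ f₁ f₂ f₃ f₄ : ArithmeticFunction ℝ, (f₁ + f₂ - f₃ + f₄) n * discSum χ P n =
        f₁ n * discSum χ P n + f₂ n * discSum χ P n - f₃ n * discSum χ P n +
        f₄ n * discSum χ P n := fun f₁ f₂ f₃ f₄ => by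
      have : (f₁ + f₂ - f₃ + f₄) n = f₁ n + f₂ n - f₃ n + f₄ n := rfl
      rw [this]; ring
    exact e _ _ _ _
  have S0 : |∑ n ∈ Ioc 0 Z, F n * discSum χ P n| ≤ D * #P * (W : ℝ) ^ 2 * L := by
    have h : ∀ n ∈ Ioc 0 Z, |F n * discSum χ P n| ≤ if n ≤ W then L * #P else 0 := by
      intro n hn
      rw [abs_mul, hF, trunc_apply]
      split_ifs
      · refine mul_le_mul ?_ (abs_discSum_le χ (fun r hr => (hP r hr).1) n) (abs_nonneg _) hL0
        rw [abs_of_nonneg vonMangoldt_nonneg]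
        exact vonMangoldt_le_log.trans (hlog n hn)
      · simp
    refine (abs_sum_le_sum_abs _ _).trans ((sum_le_sum h).trans ?_)
    rw [← sum_filter, sum_const, nsmul_eq_mul]
    have : #((Ioc 0 Z).filter (· ≤ W)) ≤ #(Ioc 0 W) := card_le_card fun i hi => by
      rw [mem_filter, mem_Ioc] at hi; exact mem_Ioc.2 ⟨hi.1.1, hi.2⟩
    rw [Nat.card_Ioc, Nat.sub_zero] at this
    calc _ ≤ (W : ℝ) * (L * #P) := mul_le_mul_of_nonneg_right (by exact_mod_cast this) (by positivity)
      _ ≤ (D * W ^ 2) * (L * #P) := by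
        refine mul_le_mul_of_nonneg_right ?_ (by positivity)
        nlinarith
      _ = _ := by ring
  have S1 : |bil χ P Z G log| ≤ 8 * D * #P * (W : ℝ) ^ 2 * L := by
    refine (abs_bil_le_typeI χ P Z W G log 1 (2 * L * (4 * D * #P)) zero_le_one (by positivity)
      ?_ ?_ ?_).trans ?_
    · intro i _
      rw [hG, trunc_apply]
      split_ifs
      · have : |μ i| ≤ 1 := abs_moebius_le_one
        rw [intCoe_apply]
        exact_mod_cast this
      · simp
    · intro i hi
      rw [hG, trunc_apply, if_neg (not_le.2 hi)]
    · intro i hi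
      rw [mem_Ioc] at hi
      refine (abs_sum_mono_mul_le (fun n => Real.log n) (fun j => discSum χ P (i * j)) ?_
        Real.log_natCast_nonneg _ (fun X => abs_sum_discSum_le hχ hP i X) (Z / i)).trans ?_
      · intro m n hmn
        rcases Nat.eq_zero_or_pos m with rfl | h0
        · simpa using Real.log_natCast_nonneg n
        · exact Real.log_le_log (by exact_mod_cast h0) (by exact_mod_cast hmn)
      · have : Real.log ((Z / i : ℕ) : ℝ) ≤ L :=
          hlog _ (mem_Ioc.2 ⟨Nat.div_pos hi.2 hi.1, Nat.div_le_self _ _⟩)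
        gcongr
    · have h0 : 0 ≤ D * #P * L := by positivity
      have : (W : ℝ) ≤ W ^ 2 := by nlinarith
      nlinarith
  have S2 : |bil χ P Z (F * G : ArithmeticFunction ℝ) (ζ : ArithmeticFunction ℝ)| ≤ 4 * D * #P * (W : ℝ) ^ 2 * L := by
    refine (abs_bil_le_typeI χ P Z (W * W) _ _ L (4 * D * #P) hL0 (by positivity)
      ?_ (trunc_mul_eq_zero W) ?_).trans ?_
    · intro i hi
      exact (abs_trunc_mul_le W i).trans (hlog i hi)
    · intro i hi
      refine le_trans (le_of_eq ?_) (abs_sum_discSum_le hχ hP i (Z / i))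
      congr 1
      refine sum_congr rfl fun j hj => ?_
      have : j ≠ 0 := by rw [mem_Ioc] at hj; omega
      simp [this]
    · push_cast
      exact le_of_eq (by ring)
  have S3 : |bil χ P Z (Λ - F : ArithmeticFunction ℝ) (((μ : ArithmeticFunction ℝ) - G) *
        (ζ : ArithmeticFunction ℝ) : ArithmeticFunction ℝ)| ≤ E := by
    refine abs_bil_typeII_le hχ hR hP hPR hZ hRZ hW _ _ (abs_vonMangoldt_sub_trunc_le W) ?_
      (abs_sub_trunc_mul_zeta_le W) (sub_trunc_mul_zeta_eq_zero W)
    intro n hn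
    have h1 : (Λ - trunc Λ W) n = Λ n - trunc Λ W n := rfl
    rw [hF, h1, trunc_apply, if_pos hn, sub_self]
  rw [split]
  refine (abs_add_le _ _).trans ?_
  have h1 := abs_sub (∑ n ∈ Ioc 0 Z, F n * discSum χ P n + bil χ P Z G log)
    (bil χ P Z (F * G : ArithmeticFunction ℝ) (ζ : ArithmeticFunction ℝ))
  have h2 := abs_add_le (∑ n ∈ Ioc 0 Z, F n * discSum χ P n) (bil χ P Z G log)
  have : 13 * D * #P * (W : ℝ) ^ 2 * L = D * #P * (W : ℝ) ^ 2 * L + 8 * D * #P * (W : ℝ) ^ 2 * L +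
    4 * D * #P * (W : ℝ) ^ 2 * L := by ring
  linarith

end Vaughan

/-! ### Primes `p` for which `p - χ p` has a prime factor in a given range -/

/-- The primes in `(R, 8 R]`. -/
def moduli (R : ℕ) : Finset ℕ := (Ioc R (8 * R)).filter Nat.Prime

open Classical in
/-- The primes `p ≤ Z` with `χ p ≠ 0` such that some prime of `(R, 8 R]` divides `p - χ p`. -/
noncomputable def goodPrimes (χ : ℕ → ℤ) (R Z : ℕ) : Finset ℕ :=
  (Ioc 0 Z).filter fun p => p.Prime ∧ χ p ≠ 0 ∧ ∃ r ∈ moduli R, (r : ℤ) ∣ (p : ℤ) - χ p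

/-- The indicator function of `n ≡ χ n ≠ 0 (mod r)`. -/
noncomputable def hit (χ : ℕ → ℤ) (r n : ℕ) : ℝ :=
  if χ n ≠ 0 ∧ (n : ZMod r) = (χ n : ZMod r) then 1 else 0

/-- The expected value of `hit χ r n`. -/
noncomputable def meanHit (χ : ℕ → ℤ) (r n : ℕ) : ℝ :=
  if χ n ≠ 0 ∧ (n : ZMod r) ≠ 0 then 1 / ((r : ℝ) - 1) else 0

lemma disc_eq (χ : ℕ → ℤ) (r n : ℕ) : disc χ r n = hit χ r n - meanHit χ r n := by
  unfold disc centred hit meanHit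
  by_cases h : χ n = 0
  · simp [h]
  · by_cases h1 : (n : ZMod r) = 0 <;> simp [h, h1]

lemma hit_nonneg (χ : ℕ → ℤ) (r n : ℕ) : 0 ≤ hit χ r n := by
  unfold hit; split_ifs <;> simp

lemma hit_le_one (χ : ℕ → ℤ) (r n : ℕ) : hit χ r n ≤ 1 := by
  unfold hit; split_ifs <;> simp

/-- A prime `p ≤ Z` has at most `log₂ (Z + 1)` hits, and none unless it is in `goodPrimes`. -/
lemma sum_hit_le {χ : ℕ → ℤ} {D : ℕ} (hχ : SignChar χ D) {R Z p : ℕ} (hp : p.Prime) (hpZ : p ≤ Z) :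
    ∑ r ∈ moduli R, hit χ r p ≤ if p ∈ goodPrimes χ R Z then (Nat.log 2 (Z + 1) : ℝ) else 0 := by
  classical
  have hdvd : ∀ r : ℕ, (p : ZMod r) = (χ p : ZMod r) ↔ (r : ℤ) ∣ (p : ℤ) - χ p := by
    intro r
    rw [← ZMod.intCast_zmod_eq_zero_iff_dvd]
    push_cast
    rw [sub_eq_zero]
  split_ifs with h
  · unfold hit
    rw [← sum_filter, sum_const, nsmul_eq_mul, mul_one]
    norm_cast
    set A := (moduli R).filter fun r => χ p ≠ 0 ∧ (p : ZMod r) = (χ p : ZMod r) with hA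
    obtain ⟨m, hm⟩ : ∃ m : ℕ, (m : ℤ) = (p : ℤ) - χ p := by
      refine ⟨((p : ℤ) - χ p).toNat, Int.toNat_of_nonneg ?_⟩
      have := hp.two_le
      rcases hχ.vals p with h | h | h <;> omega
    have hm1 : 0 < m ∧ m ≤ Z + 1 := by
      have := hp.two_le
      rcases hχ.vals p with h | h | h <;> omega
    have hprod : ∏ r ∈ A, r ∣ m := by
      refine prod_primes_dvd m (fun r hr => ?_) fun r hr => ?_
      · rw [hA, mem_filter, moduli, mem_filter] at hr
        exact hr.1.2.prime
      · rw [hA, mem_filter] at hr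
        have := (hdvd r).1 hr.2.2
        rw [← hm] at this
        exact_mod_cast this
    have h2 : 2 ^ #A ≤ ∏ r ∈ A, r := by
      rw [← prod_const]
      refine prod_le_prod' fun r hr => ?_
      rw [hA, mem_filter, moduli, mem_filter] at hr
      exact hr.1.2.two_le
    exact Nat.le_log_of_pow_le (by norm_num) ((h2.trans (Nat.le_of_dvd hm1.1 hprod)).trans hm1.2)
  · refine le_of_eq (sum_eq_zero fun r hr => ?_)
    unfold hit
    rw [if_neg]
    rintro ⟨h1, h2⟩
    exact h (mem_filter.2 ⟨mem_Ioc.2 ⟨hp.pos, hpZ⟩, hp, h1, r, hr, (hdvd r).1 h2⟩)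

open ArithmeticFunction in
lemma sum_meanHit_ge {χ : ℕ → ℤ} {D : ℕ} (hχ : SignChar χ D) {R Z r : ℕ} (hr : r ∈ moduli R) :
    1 / (8 * R : ℝ) * (Chebyshev.theta Z - (D + 1) * Real.log Z) ≤
      ∑ n ∈ Ioc 0 Z, Λ n * meanHit χ r n := by
  classical
  rw [moduli, mem_filter, mem_Ioc] at hr
  have hr2 : (2 : ℝ) ≤ r := by exact_mod_cast hr.2.two_le
  have hr8 : (r : ℝ) ≤ 8 * R := by exact_mod_cast hr.1.2
  have hL0 : 0 ≤ Real.log Z := Real.log_natCast_nonneg Z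
  -- the primes at most `Z` outside `[1, D] ∪ {r}` all contribute
  set A := (Ioc 0 Z).filter Nat.Prime with hA
  set A' := A.filter fun p => p ∉ insert r (Ioc 0 D) with hA'
  have hth : Chebyshev.theta Z = ∑ p ∈ A, Real.log p := by
    rw [Chebyshev.theta, Nat.floor_natCast]
  have h1 : Chebyshev.theta Z - (D + 1) * Real.log Z ≤ ∑ p ∈ A', Real.log p := by
    rw [hth, ← sum_filter_add_sum_filter_not A (fun p => p ∉ insert r (Ioc 0 D))]
    have : ∑ p ∈ A.filter (fun p => ¬ p ∉ insert r (Ioc 0 D)), Real.log p ≤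
        (D + 1) * Real.log Z := by
      have hle : ∀ p ∈ A.filter (fun p => ¬ p ∉ insert r (Ioc 0 D)), Real.log p ≤ Real.log Z := by
        intro p hp
        rw [hA, mem_filter, mem_filter, mem_Ioc] at hp
        exact Real.log_le_log (by exact_mod_cast hp.1.1.1) (by exact_mod_cast hp.1.1.2)
      refine (sum_le_card_nsmul _ _ _ hle).trans ?_
      rw [nsmul_eq_mul]
      refine mul_le_mul_of_nonneg_right ?_ hL0
      have hc : #(A.filter (fun p => ¬ p ∉ insert r (Ioc 0 D))) ≤ D + 1 := by
        refine (card_le_card (t := insert r (Ioc 0 D)) fun p hp => ?_).trans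
          ((card_insert_le _ _).trans (by simp))
        exact not_not.1 (mem_filter.1 hp).2
      exact_mod_cast hc
    linarith
  have h2 : ∀ p ∈ A', Λ p * meanHit χ r p = Real.log p * (1 / ((r : ℝ) - 1)) := by
    intro p hp
    rw [hA', mem_filter, hA, mem_filter, mem_Ioc, mem_insert, mem_Ioc, not_or] at hp
    obtain ⟨⟨⟨h0, hZ⟩, hpp⟩, hpr, hpD⟩ := hp
    rw [vonMangoldt_apply_prime hpp, meanHit, if_pos]
    refine ⟨fun h => hpD ⟨h0, Nat.le_of_dvd hχ.pos (hχ.prime p hpp h)⟩, ?_⟩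
    rw [Ne, ZMod.natCast_eq_zero_iff]
    intro h
    exact hpr ((Nat.prime_dvd_prime_iff_eq hr.2 hpp).1 h).symm
  have h3 : ∑ p ∈ A', Λ p * meanHit χ r p ≤ ∑ n ∈ Ioc 0 Z, Λ n * meanHit χ r n := by
    refine sum_le_sum_of_subset_of_nonneg ((filter_subset _ _).trans (filter_subset _ _))
      fun n _ _ => mul_nonneg vonMangoldt_nonneg ?_
    unfold meanHit
    split_ifs
    · apply div_nonneg <;> linarith
    · exact le_rfl
  refine le_trans ?_ h3
  rw [sum_congr rfl h2, ← sum_mul, mul_comm]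
  refine mul_le_mul h1 ?_ (by positivity) (sum_nonneg fun p _ => Real.log_natCast_nonneg p)
  exact one_div_le_one_div_of_le (by linarith) (by linarith)

open ArithmeticFunction in
/-- Hits at primes are counted by `goodPrimes`; hits at higher prime powers are negligible. -/
lemma sum_hit_upper {χ : ℕ → ℤ} {D : ℕ} (hχ : SignChar χ D) {R Z : ℕ} (hZ : 0 < Z) :
    ∑ n ∈ Ioc 0 Z, Λ n * ∑ r ∈ moduli R, hit χ r n ≤
      #(goodPrimes χ R Z) * (Real.log Z * Nat.log 2 (Z + 1)) +
      2 * #(moduli R) * √Z * Real.log Z := by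
  classical
  have hL0 : 0 ≤ Real.log Z := Real.log_natCast_nonneg Z
  rw [← sum_filter_add_sum_filter_not (Ioc 0 Z) Nat.Prime]
  refine add_le_add ?_ ?_
  · calc _ ≤ ∑ n ∈ (Ioc 0 Z).filter Nat.Prime,
          if n ∈ goodPrimes χ R Z then Real.log Z * Nat.log 2 (Z + 1) else 0 := by
          refine sum_le_sum fun n hn => ?_
          rw [mem_filter, mem_Ioc] at hn
          have h1 := sum_hit_le hχ (R := R) hn.2 hn.1.2
          have h2 : Λ n ≤ Real.log Z := vonMangoldt_le_log.trans
            (Real.log_le_log (by exact_mod_cast hn.1.1) (by exact_mod_cast hn.1.2))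
          have h3 : 0 ≤ ∑ r ∈ moduli R, hit χ r n := sum_nonneg fun r _ => hit_nonneg χ r n
          split_ifs at h1 ⊢
          · exact mul_le_mul h2 h1 h3 hL0
          · have : ∑ r ∈ moduli R, hit χ r n = 0 := le_antisymm h1 h3
            rw [this, mul_zero]
      _ ≤ ∑ n ∈ goodPrimes χ R Z, Real.log Z * Nat.log 2 (Z + 1) := by
          rw [← sum_filter]
          refine sum_le_sum_of_subset_of_nonneg (fun n hn => (mem_filter.1 hn).2)
            fun _ _ _ => by positivity
      _ = _ := by rw [sum_const, nsmul_eq_mul]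
  · have hpsi : ∑ n ∈ (Ioc 0 Z).filter (fun n => ¬ n.Prime), Λ n ≤ 2 * √Z * Real.log Z := by
      have h1 := Chebyshev.psi_sub_theta_le (x := Z) (by exact_mod_cast hZ)
      rw [Chebyshev.psi_sub_theta_eq_sum_not_prime, Nat.floor_natCast] at h1
      exact h1
    calc _ ≤ ∑ n ∈ (Ioc 0 Z).filter (fun n => ¬ n.Prime), Λ n * #(moduli R) := by
          refine sum_le_sum fun n _ => mul_le_mul_of_nonneg_left ?_ vonMangoldt_nonneg
          refine (sum_le_sum fun r _ => hit_le_one χ r n).trans ?_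
          simp
      _ ≤ (2 * √Z * Real.log Z) * #(moduli R) := by
          rw [← sum_mul]
          exact mul_le_mul_of_nonneg_right hpsi (Nat.cast_nonneg _)
      _ = _ := by ring

open ArithmeticFunction in
/-- Lower bound for the number of good primes, before the choice of `R`. -/
lemma goodPrimes_lower {χ : ℕ → ℤ} {D : ℕ} (hχ : SignChar χ D) {R Z : ℕ} (hD : D ≤ R)
    (hRZ : R ^ 2 ≤ Z) :
    #(moduli R) * (1 / (8 * R : ℝ) * (Chebyshev.theta Z - (D + 1) * Real.log Z)) ≤
      #(goodPrimes χ R Z) * (Real.log Z * Nat.log 2 (Z + 1)) +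
      2 * #(moduli R) * √Z * Real.log Z +
      (13 * D * #(moduli R) * (R : ℝ) ^ 2 * Real.log Z + 2 * ((Nat.log 2 Z + 1) *
      √(16 * (2 * (1 + Real.log (2 * Z)) ^ 3) ^ 2 * Z * (D * (#(moduli R) : ℝ) ^ 2 * √Z +
      6 * #(moduli R) * Z / (R : ℝ) ^ 2 + 6 * #(moduli R) * Z / (R * R))))) := by
  have hR0 : 0 < R := hχ.pos.trans_le hD
  have hZ : 0 < Z := lt_of_lt_of_le (by positivity) hRZ
  have hP : ∀ r ∈ moduli R, r.Prime ∧ ¬ r ∣ D := fun r hr => by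
    rw [moduli, mem_filter, mem_Ioc] at hr
    exact ⟨hr.2, fun h => absurd (Nat.le_of_dvd hχ.pos h) (by omega)⟩
  have h1 := abs_sum_vonMangoldt_disc_le hχ (R := R) (by exact_mod_cast hR0) hP
    (fun r hr => by
      rw [moduli, mem_filter, mem_Ioc] at hr
      exact_mod_cast hr.1.1.le) hZ (by exact_mod_cast hRZ) hR0
  have h2 := sum_hit_upper hχ (R := R) hZ
  have h3 : ∑ n ∈ Ioc 0 Z, Λ n * discSum χ (moduli R) n =
      ∑ n ∈ Ioc 0 Z, Λ n * ∑ r ∈ moduli R, hit χ r n -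
      ∑ r ∈ moduli R, ∑ n ∈ Ioc 0 Z, Λ n * meanHit χ r n := by
    rw [sum_comm, ← sum_sub_distrib]
    refine sum_congr rfl fun n _ => ?_
    rw [← mul_sum, ← mul_sub, ← sum_sub_distrib, discSum]
    congr 1
    exact sum_congr rfl fun r _ => disc_eq χ r n
  have h4 := card_nsmul_le_sum (moduli R) (fun r => ∑ n ∈ Ioc 0 Z, Λ n * meanHit χ r n) _
    (fun r hr => sum_meanHit_ge hχ (Z := Z) hr)
  rw [nsmul_eq_mul] at h4
  rw [h3] at h1
  have h5 := (abs_le.1 h1).1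
  linarith

/-! ### Choice of parameters -/

lemma eventually_log_le_rpow {δ : ℝ} (hδ : 0 < δ) (C : ℝ) :
    ∀ᶠ n : ℕ in atTop, C * (1 + Real.log (2 * n)) ≤ (n : ℝ) ^ δ := by
  have h1 : (fun x : ℝ => C * (2 + Real.log x)) =o[atTop] fun x : ℝ => x ^ δ := by
    refine Asymptotics.IsLittleO.const_mul_left (Asymptotics.IsLittleO.add ?_ (isLittleO_log_rpow_atTop hδ)) C
    refine Asymptotics.isLittleO_const_left.2 (Or.inr ?_)
    exact tendsto_norm_atTop_atTop.comp (tendsto_rpow_atTop hδ)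
  have h2 := (h1.bound zero_lt_one).and (eventually_gt_atTop 0)
  have h3 := tendsto_natCast_atTop_atTop (R := ℝ) |>.eventually h2
  filter_upwards [h3, eventually_ge_atTop 1] with n hn hn1
  have hn1' : (1 : ℝ) ≤ n := by exact_mod_cast hn1
  obtain ⟨h, h0⟩ := hn
  rw [one_mul, Real.norm_of_nonneg (by positivity : 0 ≤ (n : ℝ) ^ δ)] at h
  rcases le_or_gt C 0 with hC | hC
  · have : 0 ≤ Real.log (2 * n) := Real.log_nonneg (by linarith)
    have h4 : C * (1 + Real.log (2 * n)) ≤ 0 := mul_nonpos_of_nonpos_of_nonneg hC (by linarith)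
    exact h4.trans (by positivity)
  · refine le_trans ?_ ((Real.le_norm_self _).trans h)
    rw [Real.log_mul (by norm_num) (by positivity)]
    have := Real.log_two_lt_d9
    refine mul_le_mul_of_nonneg_left (by linarith) hC.le

lemma eventually_half_le_theta : ∀ᶠ n : ℕ in atTop, (n : ℝ) / 2 ≤ Chebyshev.theta n := by
  filter_upwards [eventually_log_le_rpow (δ := 1 / 4) (by norm_num) 100, eventually_ge_atTop 1]
    with n hn hn1
  have hn1' : (1 : ℝ) ≤ n := by exact_mod_cast hn1
  set T := (n : ℝ) ^ (1 / 4 : ℝ) with hT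
  have hT4 : T ^ 4 = n := by
    rw [hT, ← Real.rpow_natCast, ← Real.rpow_mul (by positivity)]; norm_num
  have hs : √(n : ℝ) = T ^ 2 := by
    rw [← hT4, show T ^ 4 = (T ^ 2) ^ 2 by ring, Real.sqrt_sq (by positivity)]
  have hl0 : 0 ≤ Real.log (2 * n) := Real.log_nonneg (by linarith)
  have hl1 : Real.log n ≤ Real.log (2 * n) := Real.log_le_log (by linarith) (by linarith)
  have hl2 : Real.log (n + 1) ≤ Real.log (2 * n) := Real.log_le_log (by linarith) (by linarith)
  have h := Chebyshev.theta_ge n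
  rw [hs] at h
  have h2 := Real.log_two_gt_d9
  have hT100 : 100 ≤ T := by linarith
  have e1 : 2 * T ^ 2 * Real.log n ≤ T ^ 3 / 50 := by
    have : Real.log n ≤ T / 100 := by linarith
    calc 2 * T ^ 2 * Real.log n ≤ 2 * T ^ 2 * (T / 100) := by gcongr
      _ = _ := by ring
  have e2 : T ≤ T ^ 4 / 1000 := by nlinarith [mul_le_mul hT100 hT100 (by norm_num) (by positivity), pow_pos (by linarith : 0 < T) 3]
  have e3 : T ^ 3 / 50 ≤ T ^ 4 / 1000 := by nlinarith [pow_pos (by linarith : 0 < T) 3]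
  have e4 : 0.69 * (n : ℝ) ≤ n * Real.log 2 := by nlinarith
  rw [hT4] at e2 e3
  linarith

lemma eventually_card_moduli_ge :
    ∀ᶠ R : ℕ in atTop, (R : ℝ) ≤ #(moduli R) * Real.log (8 * R) := by
  have h8 : Tendsto (fun R : ℕ => 8 * R) atTop atTop :=
    tendsto_id.const_mul_atTop' (by norm_num)
  filter_upwards [h8.eventually eventually_half_le_theta, eventually_ge_atTop 1] with R hR hR1
  have hR1' : (1 : ℝ) ≤ R := by exact_mod_cast hR1
  have h1 := Chebyshev.theta_le_log4_mul_x (x := R) (by positivity)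
  have h4 : Real.log 4 ≤ 1.4 := by
    rw [show (4 : ℝ) = 2 ^ 2 by norm_num, Real.log_pow]
    have := Real.log_two_lt_d9
    push_cast; linarith
  have h2 : Chebyshev.theta (8 * R : ℕ) = Chebyshev.theta R + ∑ p ∈ moduli R, Real.log p := by
    rw [Chebyshev.theta, Chebyshev.theta, Nat.floor_natCast, Nat.floor_natCast, moduli,
      ← sum_union]
    · congr 1
      rw [← filter_union, Ioc_union_Ioc_eq_Ioc (by omega) (by omega)]
    · refine disjoint_filter_filter ?_
      rw [disjoint_left]
      intro x hx hx'
      rw [mem_Ioc] at hx hx'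
      omega
  have h3 : ∑ p ∈ moduli R, Real.log p ≤ #(moduli R) * Real.log (8 * R) := by
    rw [← nsmul_eq_mul]
    refine sum_le_card_nsmul _ _ _ fun p hp => ?_
    rw [moduli, mem_filter, mem_Ioc] at hp
    exact Real.log_le_log (by exact_mod_cast hp.2.pos) (by exact_mod_cast hp.1.2)
  push_cast at hR h2
  nlinarith

set_option maxHeartbeats 1600000 in
/-- Bookkeeping for the error terms of `goodPrimes_lower`: `Z` and `R` stand for themselves, `K` and
`G` for the numbers of moduli and of good primes, and `T` dominates all logarithms and constants. -/
lemma error_le {Z R T K D G L l₁ l₂ M th : ℝ} (hT : 2 ^ 25 ≤ T) (hZ : 0 < Z) (hR : 0 < R) (hK : 0 < K)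
    (hG : 0 ≤ G) (hD : 1 ≤ D) (hDT : D + 1 ≤ T) (hL : 0 ≤ L) (hLT : L ≤ T) (hl₁ : 0 ≤ l₁) (hl₁T : l₁ ≤ T)
    (hl₂T : l₂ ≤ T) (hM : 0 ≤ M) (hMT : M ≤ T) (hKR : R ≤ K * T)
    (hZR : √Z * R ^ 2 * T ^ 10 ≤ Z) (hTR : T ^ 11 ≤ R) (hth : Z / 2 ≤ th)
    (h : K * (1 / (8 * R) * (th - (D + 1) * L)) ≤ G * (L * l₁) + 2 * K * √Z * L +
      (13 * D * K * R ^ 2 * L + 2 * (l₂ *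
      √(16 * (2 * M ^ 3) ^ 2 * Z * (D * K ^ 2 * √Z + 6 * K * Z / R ^ 2 + 6 * K * Z / (R * R)))))) :
    Z ≤ G * T ^ 4 := by
  have hT0 : 0 < T := by linarith
  have hs : 0 ≤ √Z := Real.sqrt_nonneg _
  have hss : √Z * √Z = Z := Real.mul_self_sqrt hZ.le
  have hT1 : 1 ≤ T := by linarith
  have hR1 : 1 ≤ R := (one_le_pow₀ hT1).trans hTR
  have hsR : R ^ 2 * T ^ 10 ≤ √Z := by
    have h0 : 0 < √Z := Real.sqrt_pos.2 hZ
    refine le_of_mul_le_mul_left ?_ h0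
    rw [hss]; linarith
  have hX : 16 * (2 * M ^ 3) ^ 2 * Z * (D * K ^ 2 * √Z + 6 * K * Z / R ^ 2 + 6 * K * Z / (R * R)) ≤
      (K * Z / (128 * R * T)) ^ 2 := by
    have a1 : 16 * (2 * M ^ 3) ^ 2 ≤ 64 * T ^ 6 := by
      calc 16 * (2 * M ^ 3) ^ 2 ≤ 16 * (2 * T ^ 3) ^ 2 := by gcongr
        _ = _ := by ring
    have a2 : D * K ^ 2 * √Z + 6 * K * Z / R ^ 2 + 6 * K * Z / (R * R) ≤
        K ^ 2 * (T * √Z + 12 * T * Z / R ^ 3) := by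
      have : 12 * K * Z / R ^ 2 ≤ K ^ 2 * (12 * T * Z / R ^ 3) := by
        rw [mul_div_assoc', div_le_div_iff₀ (by positivity) (by positivity)]
        have : 0 ≤ 12 * K * Z * R ^ 2 := by positivity
        nlinarith
      have e : 6 * K * Z / R ^ 2 + 6 * K * Z / (R * R) = 12 * K * Z / R ^ 2 := by
        field_simp; ring
      have e2 : D * K ^ 2 * √Z ≤ K ^ 2 * (T * √Z) := by
        have : 0 ≤ K ^ 2 * √Z := by positivity
        nlinarith
      rw [add_assoc, e, mul_add]
      linarith
    have a3 : (64 * T ^ 6) * (T * √Z + 12 * T * Z / R ^ 3) * (128 ^ 2 * R ^ 2 * T ^ 2) ≤ Z := by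
      have b1 : 2 ^ 20 * T ^ 9 * (√Z * R ^ 2) ≤ Z / 2 := by
        have : 2 ^ 21 * T ^ 9 ≤ T ^ 10 := by
          have := pow_pos hT0 9
          nlinarith
        have h0 : 0 ≤ √Z * R ^ 2 := by positivity
        nlinarith
      have b2 : 2 ^ 20 * 12 * T ^ 9 * Z / R ≤ Z / 2 := by
        rw [div_le_div_iff₀ hR (by norm_num)]
        have : 2 ^ 25 * T ^ 9 ≤ R := by
          refine le_trans ?_ hTR
          have h9 := pow_pos hT0 9
          have : T ^ 11 = T ^ 2 * T ^ 9 := by ring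
          rw [this]
          refine mul_le_mul_of_nonneg_right ?_ h9.le
          nlinarith
        nlinarith [pow_pos hT0 9]
      calc _ = 2 ^ 20 * T ^ 9 * (√Z * R ^ 2) + 2 ^ 20 * 12 * T ^ 9 * Z / R := by
            field_simp; ring
        _ ≤ Z := by linarith
    calc _ ≤ 64 * T ^ 6 * Z * (K ^ 2 * (T * √Z + 12 * T * Z / R ^ 3)) := by gcongr
      _ = K ^ 2 * Z * ((64 * T ^ 6) * (T * √Z + 12 * T * Z / R ^ 3) * (128 ^ 2 * R ^ 2 * T ^ 2)) /
          (128 * R * T) ^ 2 := by field_simp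
      _ ≤ K ^ 2 * Z * Z / (128 * R * T) ^ 2 := by gcongr
      _ = _ := by field_simp
  have hE : 2 * (l₂ *
      √(16 * (2 * M ^ 3) ^ 2 * Z * (D * K ^ 2 * √Z + 6 * K * Z / R ^ 2 + 6 * K * Z / (R * R)))) ≤
      K * Z / (64 * R) := by
    have := Real.sqrt_le_sqrt hX
    rw [Real.sqrt_sq (by positivity)] at this
    calc _ ≤ 2 * (T * (K * Z / (128 * R * T))) := by gcongr
      _ = _ := by field_simp; ring
  -- the remaining terms, all compared with `K * Z / R`
  have hRs : R * √Z * T ^ 10 ≤ Z := by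
    refine le_trans ?_ hZR
    have : 0 ≤ √Z * T ^ 10 := by positivity
    nlinarith [mul_le_mul_of_nonneg_right hR1 hR.le]
  have hDL : (D + 1) * L ≤ Z / 8 := by
    have h1 : (D + 1) * L ≤ T * T := by gcongr
    have h2 : T ^ 10 ≤ Z := by
      refine le_trans ?_ hRs
      have : 1 ≤ √Z := (one_le_mul_of_one_le_of_one_le (one_le_pow₀ hR1) (one_le_pow₀ hT1)).trans hsR
      have : 1 ≤ R * √Z := one_le_mul_of_one_le_of_one_le hR1 this
      nlinarith [pow_pos hT0 10]
    have h3 : 8 * (T * T) ≤ T ^ 10 := by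
      have : (8 : ℝ) ≤ T ^ 8 := le_trans (by linarith) (le_self_pow₀ hT1 (by norm_num))
      calc 8 * (T * T) ≤ T ^ 8 * (T * T) := by gcongr
        _ = _ := by ring
    linarith
  have hmain : K * Z / R * (3 / 64) ≤ K * (1 / (8 * R) * (th - (D + 1) * L)) := by
    calc K * Z / R * (3 / 64) = K * (1 / (8 * R) * (Z / 2 - Z / 8)) := by field_simp; ring
      _ ≤ _ := by gcongr
  have h2 : 2 * K * √Z * L ≤ K * Z / R * (1 / 128) := by
    have : 256 * T ≤ T ^ 10 := by
      have : (256 : ℝ) ≤ T ^ 9 := le_trans (by linarith) (le_self_pow₀ hT1 (by norm_num))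
      calc 256 * T ≤ T ^ 9 * T := by gcongr
        _ = _ := by ring
    calc 2 * K * √Z * L ≤ 2 * K * √Z * T := by gcongr
      _ = K * (R * √Z * (256 * T)) / R * (1 / 128) := by field_simp; norm_num
      _ ≤ K * (R * √Z * T ^ 10) / R * (1 / 128) := by gcongr
      _ ≤ K * Z / R * (1 / 128) := by gcongr
  have h3 : 13 * D * K * R ^ 2 * L ≤ K * Z / R * (1 / 128) := by
    have : 1664 * (T * T) ≤ T ^ 10 := by
      have : (1664 : ℝ) ≤ T ^ 8 := le_trans (by linarith) (le_self_pow₀ hT1 (by norm_num))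
      calc 1664 * (T * T) ≤ T ^ 8 * (T * T) := by gcongr
        _ = _ := by ring
    calc 13 * D * K * R ^ 2 * L ≤ 13 * T * K * R ^ 2 * T := by gcongr; linarith
      _ = K * R * (R ^ 2 * (1664 * (T * T))) / R * (1 / 128) := by field_simp; ring
      _ ≤ K * R * (R ^ 2 * T ^ 10) / R * (1 / 128) := by gcongr
      _ ≤ K * R * √Z / R * (1 / 128) := by gcongr
      _ ≤ K * (R * √Z * T ^ 10) / R * (1 / 128) := by
          have h0 : 0 ≤ K * (R * √Z) := by positivity
          have h1 := mul_le_mul_of_nonneg_left (one_le_pow₀ hT1 (n := 10)) h0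
          have h2 : K * R * √Z ≤ K * (R * √Z * T ^ 10) := by linarith
          exact mul_le_mul_of_nonneg_right (div_le_div_of_nonneg_right h2 hR.le) (by norm_num)
      _ ≤ K * Z / R * (1 / 128) := by gcongr
  have h4 : K * Z / R * (1 / 64) ≤ G * (T * T) := by
    have : G * (L * l₁) ≤ G * (T * T) := by gcongr
    have e : K * Z / (64 * R) = K * Z / R * (1 / 64) := by field_simp
    rw [e] at hE
    linarith
  have h5 : Z ≤ K * Z / R * T := by
    rw [div_mul_eq_mul_div, le_div_iff₀ hR]
    nlinarith
  have h6 : Z ≤ 64 * (G * (T * T)) * T := by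
    have := mul_le_mul_of_nonneg_right h4 hT0.le
    linarith
  have h7 : 0 ≤ G * T ^ 3 := by positivity
  nlinarith

set_option maxHeartbeats 1600000 in
/-- Almost `Z` primes `p ≤ Z` have `p - χ p = r k` with both factors at most about `Z ^ (3 / 4)`.
Here `r` is a prime of size about `Z ^ (1 / 4)`. -/
theorem eventually_goodPrimes {χ : ℕ → ℤ} {D : ℕ} (hχ : SignChar χ D) {η : ℝ} (hη : 0 < η)
    (hη' : η ≤ 1 / 16) :
    ∀ᶠ Z : ℕ in atTop, ∃ S : Finset ℕ, (∀ p ∈ S, p.Prime ∧ p ≤ Z ∧ ∃ r k : ℕ,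
      (p : ℤ) - χ p = r * k ∧ (r : ℝ) ≤ (Z : ℝ) ^ (3 / 4 + 2 * η) ∧
      (k : ℝ) ≤ (Z : ℝ) ^ (3 / 4 + 2 * η)) ∧ (Z : ℝ) ^ (1 - η) ≤ #S := by
  -- `R = Z ^ (1 / 4 - η)` is just short of the limit of the Type II estimate, and `T = Z ^ (η / 16)`
  -- absorbs logarithms and constants
  have hδ : 0 < η / 16 := by positivity
  have hRt : Tendsto (fun Z : ℕ => ⌊(Z : ℝ) ^ (1 / 4 - η)⌋₊) atTop atTop :=
    tendsto_nat_floor_atTop.comp ((tendsto_rpow_atTop (by linarith)).comp tendsto_natCast_atTop_atTop)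
  filter_upwards [eventually_log_le_rpow hδ (2 ^ 25), eventually_log_le_rpow hδ (D + 1),
    eventually_half_le_theta, hRt.eventually eventually_card_moduli_ge,
    hRt.eventually (eventually_ge_atTop (D + 8)), eventually_ge_atTop 8]
    with Z hT1 hT2 hth hcard hRD hZ8
  set R := ⌊(Z : ℝ) ^ (1 / 4 - η)⌋₊ with hRdef
  set T := (Z : ℝ) ^ (η / 16) with hT
  have hZ8' : (8 : ℝ) ≤ Z := by exact_mod_cast hZ8
  have hZ0 : (0 : ℝ) < Z := by linarith
  have hl0 : 0 ≤ Real.log (2 * Z) := Real.log_nonneg (by linarith)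
  have hD1 : (1 : ℝ) ≤ D := by exact_mod_cast hχ.pos
  have hT25 : 2 ^ 25 ≤ T := by nlinarith
  have hT1' : 1 ≤ T := by linarith
  have hTpos : 0 < T := by linarith
  have hRle : (R : ℝ) ≤ (Z : ℝ) ^ (1 / 4 - η) := Nat.floor_le (by positivity)
  have hRge : (Z : ℝ) ^ (1 / 4 - η) ≤ 2 * R := by
    have h1 := (Nat.lt_floor_add_one ((Z : ℝ) ^ (1 / 4 - η))).le
    have : (8 : ℝ) ≤ R := by exact_mod_cast (by omega : 8 ≤ R)
    rw [← hRdef] at h1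
    linarith
  have hR8 : (8 : ℝ) ≤ R := by exact_mod_cast (by omega : 8 ≤ R)
  have hTpow : ∀ n : ℕ, T ^ n = (Z : ℝ) ^ (η / 16 * n) := by
    intro n; rw [hT, ← Real.rpow_natCast, ← Real.rpow_mul hZ0.le]
  have hZ1 : (1 : ℝ) ≤ Z := by linarith
  have hR2 : (R : ℝ) ^ 2 ≤ (Z : ℝ) ^ (1 / 2 - 2 * η) := by
    calc (R : ℝ) ^ 2 ≤ ((Z : ℝ) ^ (1 / 4 - η)) ^ 2 := by gcongr
      _ = _ := by rw [← Real.rpow_natCast, ← Real.rpow_mul hZ0.le]; congr 1; push_cast; ring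
  have hRZ : R ^ 2 ≤ Z := by
    have : (R : ℝ) ^ 2 ≤ Z := hR2.trans (by
      calc _ ≤ (Z : ℝ) ^ (1 : ℝ) := Real.rpow_le_rpow_of_exponent_le hZ1 (by linarith)
        _ = Z := Real.rpow_one _)
    exact_mod_cast this
  have h8R : (8 : ℝ) * R ≤ Z := by
    have : (R : ℝ) ^ 2 ≤ Z := by exact_mod_cast hRZ
    nlinarith
  have hlogle : ∀ n : ℕ, 0 < n → n ≤ 2 * Z → (Nat.log 2 n : ℝ) ≤ 2 * Real.log (2 * Z) := by
    intro n hn0 hn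
    have h1 : (Nat.log 2 n : ℝ) ≤ Real.logb 2 n := Real.natLog_le_logb n 2
    have h2 : Real.logb 2 n = Real.log n / Real.log 2 := rfl
    have h3 : Real.log n ≤ Real.log (2 * Z) :=
      Real.log_le_log (by exact_mod_cast hn0) (by exact_mod_cast hn)
    have h4 := Real.log_two_gt_d9
    rw [h2] at h1
    refine h1.trans ?_
    rw [div_le_iff₀ (by linarith)]
    nlinarith
  have hLl : Real.log Z ≤ Real.log (2 * Z) := Real.log_le_log hZ0 (by linarith)
  have hK0 : (0 : ℝ) < #(moduli R) := by
    rcases Nat.eq_zero_or_pos #(moduli R) with h | h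
    · rw [h] at hcard; push_cast at hcard; linarith
    · exact_mod_cast h
  have key := error_le (Z := Z) (R := R) (T := T) (K := #(moduli R)) (D := D)
    (G := #(goodPrimes χ R Z)) (L := Real.log Z) (l₁ := Nat.log 2 (Z + 1)) (l₂ := Nat.log 2 Z + 1)
    (M := 1 + Real.log (2 * Z)) (th := Chebyshev.theta Z) hT25 hZ0 (by linarith) hK0
    (Nat.cast_nonneg _) hD1 (by nlinarith) (Real.log_natCast_nonneg Z) (by linarith)
    (Nat.cast_nonneg _)
    (by have := hlogle (Z + 1) (by omega) (by omega); linarith)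
    (by have := hlogle Z (by omega) (by omega); linarith)
    (by linarith) (by linarith)
    (by
      have : Real.log (8 * R) ≤ T := by
        have : Real.log (8 * R) ≤ Real.log (2 * Z) := Real.log_le_log (by linarith) (by linarith)
        linarith
      exact hcard.trans (mul_le_mul_of_nonneg_left this hK0.le))
    (by
      rw [hTpow, Real.sqrt_eq_rpow]
      calc _ ≤ (Z : ℝ) ^ (1 / 2 : ℝ) * (Z : ℝ) ^ (1 / 2 - 2 * η) * (Z : ℝ) ^ (η / 16 * (10 : ℕ)) := by
            gcongr
        _ = (Z : ℝ) ^ (1 / 2 + (1 / 2 - 2 * η) + (η / 16 * (10 : ℕ))) := by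
            rw [← Real.rpow_add hZ0, ← Real.rpow_add hZ0]
        _ ≤ (Z : ℝ) ^ (1 : ℝ) := Real.rpow_le_rpow_of_exponent_le hZ1 (by push_cast; linarith)
        _ = Z := Real.rpow_one _)
    (by
      have h1 : T ^ 12 ≤ (Z : ℝ) ^ (1 / 4 - η) := by
        rw [hTpow]
        exact Real.rpow_le_rpow_of_exponent_le hZ1 (by push_cast; linarith)
      have h2 : T ^ 12 = T * T ^ 11 := by ring
      have h3 := pow_pos hTpos 11
      nlinarith)
    hth (goodPrimes_lower hχ (by omega) hRZ)
  refine ⟨goodPrimes χ R Z, fun p hp => ?_, ?_⟩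
  · classical
    rw [goodPrimes, mem_filter, mem_Ioc] at hp
    obtain ⟨⟨hp0, hpZ⟩, hpp, -, r, hr, c, hc⟩ := hp
    refine ⟨hpp, hpZ, r, c.toNat, ?_⟩
    rw [moduli, mem_filter, mem_Ioc] at hr
    have hp2 := hpp.two_le
    have hr0 : (0 : ℤ) < r := by exact_mod_cast hr.2.pos
    have hv : -1 ≤ χ p ∧ χ p ≤ 1 := by rcases hχ.vals p with h | h | h <;> omega
    have hc0 : 0 ≤ c := by
      by_contra hneg
      have : (r : ℤ) * c ≤ 0 := by nlinarith
      omega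
    refine ⟨by rw [Int.toNat_of_nonneg hc0]; exact hc, ?_, ?_⟩
    · calc (r : ℝ) ≤ 8 * R := by exact_mod_cast hr.1.2
        _ ≤ R * R := by gcongr
        _ = (R : ℝ) ^ 2 := by ring
        _ ≤ _ := hR2
        _ ≤ _ := Real.rpow_le_rpow_of_exponent_le hZ1 (by linarith)
    · have h1 : (r : ℝ) * (c.toNat : ℝ) ≤ 2 * Z := by
        have : (r : ℤ) * c ≤ 2 * Z := by rw [← hc]; omega
        have h2 : ((r : ℤ) : ℝ) * ((c.toNat : ℤ) : ℝ) ≤ 2 * Z := by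
          rw [Int.toNat_of_nonneg hc0]; exact_mod_cast this
        exact_mod_cast h2
      have h2 : (R : ℝ) ≤ r := by exact_mod_cast hr.1.1.le
      have h3 : (Z : ℝ) ^ (1 / 4 - η) * (c.toNat : ℝ) ≤ 4 * Z := by
        have : (0 : ℝ) ≤ c.toNat := Nat.cast_nonneg _
        nlinarith
      have h4 : (4 : ℝ) * Z ≤ (Z : ℝ) ^ (1 / 4 - η) * (Z : ℝ) ^ (3 / 4 + 2 * η) := by
        rw [← Real.rpow_add hZ0, show 1 / 4 - η + (3 / 4 + 2 * η) = η + 1 by ring,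
          Real.rpow_add hZ0, Real.rpow_one]
        have : T ≤ (Z : ℝ) ^ η := Real.rpow_le_rpow_of_exponent_le hZ1 (by linarith)
        nlinarith
      exact le_of_mul_le_mul_left (h3.trans h4) (by positivity)
  · have h1 : (Z : ℝ) ^ (1 - η) * T ^ 4 ≤ Z := by
      rw [hTpow, ← Real.rpow_add hZ0]
      calc _ ≤ (Z : ℝ) ^ (1 : ℝ) := Real.rpow_le_rpow_of_exponent_le hZ1 (by push_cast; linarith)
        _ = Z := Real.rpow_one _
    exact le_of_mul_le_mul_right (h1.trans key) (by positivity)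

/-! ### Integers with `n ∣ u n` -/

lemma quadChar_signChar {Δ : ℤ} (hΔ : Δ ≠ 0) : SignChar (quadChar Δ) (4 * Δ.natAbs) where
  pos := by have := Int.natAbs_pos.2 hΔ; omega
  mul m n := by
    unfold quadChar
    by_cases hm : Even m
    · simp [hm]
    · by_cases hn : Even n
      · simp [hn]
      · have hmn : ¬ Even (m * n) := by rw [Nat.even_mul]; tauto
        rw [if_neg hm, if_neg hn, if_neg hmn]
        have : NeZero m := ⟨by rintro rfl; simp at hm⟩
        have : NeZero n := ⟨by rintro rfl; simp at hn⟩
        exact jacobiSym.mul_right Δ m n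
  per n := by
    unfold quadChar
    have h4 : Even (4 * Δ.natAbs) := ⟨2 * Δ.natAbs, by ring⟩
    by_cases hn : Even n
    · rw [if_pos hn, if_pos (hn.add h4)]
    · have hn' : ¬ Even (n + 4 * Δ.natAbs) := by rw [Nat.even_add]; tauto
      rw [if_neg hn, if_neg hn', jacobiSym.mod_right Δ (Nat.not_even_iff_odd.1 hn'),
        jacobiSym.mod_right Δ (Nat.not_even_iff_odd.1 hn), Nat.add_mod_right]
  vals n := by
    unfold quadChar
    split_ifs
    · exact Or.inl rfl
    · exact jacobiSym.trichotomy Δ n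
  prime p hp h := by
    unfold quadChar at h
    split_ifs at h with he
    · rw [(hp.even_iff).1 he]
      exact ⟨2 * Δ.natAbs, by ring⟩
    · have : NeZero p := ⟨hp.ne_zero⟩
      have h1 := jacobiSym.eq_zero_iff_not_coprime.1 h
      have h2 : p ∣ Δ.natAbs := by
        by_contra hc
        exact h1 (Nat.Coprime.symm ((Nat.Prime.coprime_iff_not_dvd hp).2 hc))
      exact h2.mul_left 4

open scoped Nat

lemma mul_dvd_factorial_sq {y r k : ℕ} (hr : r ≤ y) (hk : k ≤ y) (h : 0 < r * k) :
    r * k ∣ y ! ^ 2 := by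
  rw [pow_two]
  exact mul_dvd_mul (Nat.dvd_factorial (Nat.pos_of_mul_pos_right h) hr)
    (Nat.dvd_factorial (Nat.pos_of_mul_pos_left h) hk)

/-- The integers `(y!)² ∏ p`, over primes `p` such that `p - χ p` is a product of two factors at
most `y`, divide the corresponding term of the Lucas sequence. -/
lemma IsLucas.dvd_construct {a₁ a₂ : ℤ} {u : ℕ → ℤ} (h : IsLucas a₁ a₂ u)
    (ha₂ : a₂ = 1 ∨ a₂ = -1) (hΔ : a₁ ^ 2 + 4 * a₂ ≠ 0) {y : ℕ} (hy : 3 ≤ y) (A : Finset ℕ)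
    (hA : ∀ p ∈ A, p.Prime ∧ y < p ∧ ∃ r k : ℕ,
      (p : ℤ) - quadChar (a₁ ^ 2 + 4 * a₂) p = r * k ∧ r ≤ y ∧ k ≤ y) :
    ((y ! ^ 2 * ∏ p ∈ A, p : ℕ) : ℤ) ∣ u (y ! ^ 2 * ∏ p ∈ A, p) := by
  have hχ := quadChar_signChar hΔ
  set χ := quadChar (a₁ ^ 2 + 4 * a₂) with hχdef
  refine h.self_dvd fun q hq hqn => ?_
  have hfac : ∀ z, z ∣ y ! ^ 2 → z ∣ y ! ^ 2 * ∏ p ∈ A, p := fun z hz => hz.mul_right _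
  rcases eq_or_ne q 2 with rfl | hq2
  · rcases h.two_dvd ha₂ with h2 | h3
    · exact ⟨2, by norm_num, hfac 2 ((Nat.dvd_factorial (by norm_num) (by omega)).trans
        (dvd_pow_self _ (by norm_num))), h2, Or.inl rfl⟩
    · exact ⟨3, by norm_num, hfac 3 ((Nat.dvd_factorial (by norm_num) (by omega)).trans
        (dvd_pow_self _ (by norm_num))), h3, Or.inr (by norm_num)⟩
  · have hq3 : 3 ≤ q := by have := hq.two_le; omega
    obtain ⟨z, hz⟩ : ∃ z : ℕ, (z : ℤ) = (q : ℤ) - χ q := by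
      refine ⟨((q : ℤ) - χ q).toNat, Int.toNat_of_nonneg ?_⟩
      rcases hχ.vals q with h | h | h <;> omega
    have hz0 : 0 < z := by rcases hχ.vals q with h | h | h <;> omega
    refine ⟨z, hz0, hfac z ?_, h.prime_dvd ha₂ hq hq2 hz, ?_⟩
    · rcases (Nat.Prime.dvd_mul hq).1 hqn with h1 | h1
      · have hqy : q ≤ y := (Nat.Prime.dvd_factorial hq).1 (hq.dvd_of_dvd_pow h1)
        rcases hχ.vals q with h | h | h
        · have e : z = 1 * q := by omega
          rw [e]; exact mul_dvd_factorial_sq (by omega) hqy (by omega)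
        · have e : z = 1 * (q - 1) := by omega
          rw [e]; exact mul_dvd_factorial_sq (by omega) (by omega) (by omega)
        · have hodd := hq.odd_of_ne_two hq2
          obtain ⟨t, ht⟩ := hodd
          have e : z = 2 * (t + 1) := by omega
          rw [e]; exact mul_dvd_factorial_sq (by omega) (by omega) (by omega)
      · obtain ⟨p, hp, hqp⟩ := (Prime.dvd_finsetProd_iff hq.prime _).1 h1
        obtain rfl := (Nat.prime_dvd_prime_iff_eq hq (hA p hp).1).1 hqp
        obtain ⟨-, -, r, k, hrk, hr, hk⟩ := hA q hp
        have e : z = r * k := by rw [← hz] at hrk; exact_mod_cast hrk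
        rw [e]
        exact mul_dvd_factorial_sq hr hk (by omega)
    · rcases hχ.vals q with h | h | h
      · left; omega
      · right
        intro hd
        exact absurd (Nat.le_of_dvd hz0 hd) (by omega)
      · right
        intro hd
        have e : z = q + 1 := by omega
        rw [e, Nat.dvd_add_right (dvd_refl q)] at hd
        exact absurd (Nat.le_of_dvd one_pos hd) (by omega)

/-- Distinct sets of primes give distinct integers, so their number bounds `countDiv` from below. -/
lemma choose_le_countDiv {a₁ a₂ : ℤ} {u : ℕ → ℤ} (h : IsLucas a₁ a₂ u)
    (ha₂ : a₂ = 1 ∨ a₂ = -1) (hΔ : a₁ ^ 2 + 4 * a₂ ≠ 0) {y : ℕ} (hy : 3 ≤ y) (S : Finset ℕ) {Z k : ℕ}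
    {x : ℝ} (hZ : ∀ p ∈ S, p ≤ Z)
    (hS : ∀ p ∈ S, p.Prime ∧ y < p ∧ ∃ r k : ℕ,
      (p : ℤ) - quadChar (a₁ ^ 2 + 4 * a₂) p = r * k ∧ r ≤ y ∧ k ≤ y)
    (hx : ((y ! ^ 2 * Z ^ k : ℕ) : ℝ) ≤ x) : (#S).choose k ≤ countDiv u x := by
  classical
  have hprime : ∀ A ∈ S.powersetCard k, ∀ p ∈ A, p.Prime := fun A hA p hp =>
    (hS p ((mem_powersetCard.1 hA).1 hp)).1
  rw [← card_powersetCard, countDiv]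
  refine card_le_card_of_injOn (fun A => y ! ^ 2 * ∏ p ∈ A, p) ?_ ?_
  · intro A hA
    have hA' := mem_powersetCard.1 (mem_coe.1 hA)
    rw [mem_coe, mem_filter, mem_Icc]
    refine ⟨⟨?_, ?_⟩, h.dvd_construct ha₂ hΔ hy A fun p hp => hS p (hA'.1 hp)⟩
    · have : 0 < ∏ p ∈ A, p := prod_pos fun p hp => (hprime A hA p hp).pos
      have h2 := Nat.factorial_pos y
      exact Nat.succ_le_of_lt (by positivity)
    · refine Nat.le_floor (le_trans ?_ hx)
      have : ∏ p ∈ A, p ≤ Z ^ k := by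
        rw [← hA'.2]
        exact prod_le_pow_card _ _ _ fun p hp => hZ p (hA'.1 hp)
      exact_mod_cast Nat.mul_le_mul_left _ this
  · intro A hA B hB hAB
    have h0 : 0 < y ! ^ 2 := pow_pos (Nat.factorial_pos y) 2
    have h1 : ∏ p ∈ A, p = ∏ p ∈ B, p := Nat.eq_of_mul_eq_mul_left h0 hAB
    rw [← Nat.primeFactors_prod (hprime A hA), h1, Nat.primeFactors_prod (hprime B hB)]

lemma rpow_le_choose {s k : ℕ} {w : ℝ} (hw : 0 ≤ w) (h : k * w + k ≤ s) : w ^ k ≤ s.choose k := by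
  have hks : k ≤ s := by
    have : (k : ℝ) ≤ s := by nlinarith [mul_nonneg (Nat.cast_nonneg (α := ℝ) k) hw]
    exact_mod_cast this
  have h1 := Nat.pow_le_choose (α := ℝ) k s
  refine le_trans ?_ h1
  rw [le_div_iff₀ (by exact_mod_cast Nat.factorial_pos k)]
  have h2 : ((k ! : ℕ) : ℝ) ≤ (k : ℝ) ^ k := by exact_mod_cast Nat.factorial_le_pow k
  calc w ^ k * (k ! : ℕ) ≤ w ^ k * (k : ℝ) ^ k := by gcongr
    _ = (k * w) ^ k := by rw [mul_pow, mul_comm]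
    _ ≤ ((s + 1 - k : ℕ) : ℝ) ^ k := by
      gcongr
      rw [Nat.cast_sub (by omega)]
      push_cast
      linarith

set_option maxHeartbeats 1600000 in
/-- The count with explicit loss `7 η`. With `Z` about `(log x) ^ A`, the sets of `k ≈ log x / log Z`
good primes up to `Z` number at least `(Z ^ (1 / 4 - 6 η)) ^ k`. -/
theorem eventually_countDiv_ge {a₁ a₂ : ℤ} {u : ℕ → ℤ} (h : IsLucas a₁ a₂ u)
    (ha₂ : a₂ = 1 ∨ a₂ = -1) (hΔ : a₁ ^ 2 + 4 * a₂ ≠ 0) {η : ℝ} (hη : 0 < η) (hη' : η ≤ 1 / 64) :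
    ∀ᶠ x : ℝ in atTop, x ^ (1 / 4 - 7 * η) ≤ (countDiv u x : ℝ) := by
  obtain ⟨σ, hσ⟩ : ∃ σ : ℝ, σ = 3 / 4 + 2 * η := ⟨_, rfl⟩
  have hσ0 : 0 < σ := by rw [hσ]; positivity
  have hσ1 : σ ≤ 1 := by linarith
  -- this exponent makes `(y!)²`, where `y = Z ^ σ`, as large as it can be while staying below `x ^ η`
  set A := (1 - η) / σ with hA
  have hA0 : 0 < A := div_pos (by linarith) hσ0
  have hAσ : A * σ = 1 - η := div_mul_cancel₀ _ hσ0.ne'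
  have hA1 : 1 / A ≤ 3 / 4 + 4 * η := by
    rw [hA, one_div_div, div_le_iff₀ (by linarith), hσ]; nlinarith
  have hlogt : Tendsto Real.log atTop atTop := Real.tendsto_log_atTop
  have hZt : Tendsto (fun x : ℝ => ⌊(Real.log x) ^ A⌋₊) atTop atTop :=
    tendsto_nat_floor_atTop.comp ((tendsto_rpow_atTop hA0).comp hlogt)
  filter_upwards [hZt.eventually (eventually_goodPrimes (quadChar_signChar hΔ) hη (by linarith)),
    hZt.eventually (eventually_log_le_rpow (δ := η * σ) (by positivity) (2 / η)),
    hZt.eventually (eventually_log_le_rpow (δ := 1 / 4 - 3 * η) (by linarith) 2),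
    hZt.eventually (eventually_log_le_rpow (δ := σ) hσ0 3),
    hZt.eventually (eventually_log_le_rpow (δ := η) hη 8),
    hZt.eventually (eventually_ge_atTop 3),
    hlogt.eventually (eventually_ge_atTop 1), eventually_ge_atTop 1]
    with x hgood h1 h2 h3 h4 hZ3 hl1 hx1
  set ℓ := Real.log x with hℓ
  set Z := ⌊ℓ ^ A⌋₊ with hZ
  have hx0 : 0 < x := by linarith
  have hZ3' : (3 : ℝ) ≤ Z := by exact_mod_cast hZ3
  have hZ0 : (0 : ℝ) < Z := by linarith
  have hZ1 : (1 : ℝ) ≤ Z := by linarith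
  have hlZ1 : 1 ≤ Real.log Z := by
    rw [Real.le_log_iff_exp_le hZ0]
    have := Real.exp_one_lt_d9
    linarith
  have hl2Z : Real.log Z ≤ Real.log (2 * Z) := Real.log_le_log hZ0 (by linarith)
  have hl0 : 0 ≤ ℓ := by linarith
  have hZle : (Z : ℝ) ≤ ℓ ^ A := Nat.floor_le (by positivity)
  have hZge : ℓ ^ A ≤ 2 * Z := by
    have := (Nat.lt_floor_add_one (ℓ ^ A)).le
    rw [← hZ] at this
    linarith
  set y := ⌊(Z : ℝ) ^ σ⌋₊ with hy
  have hyle : (y : ℝ) ≤ (Z : ℝ) ^ σ := Nat.floor_le (by positivity)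
  have hy3 : 3 ≤ y := Nat.le_floor (by push_cast; nlinarith)
  -- the smooth part of the integers constructed is small
  have hM : 2 * (Z : ℝ) ^ σ * Real.log Z ≤ η * ℓ := by
    have e1 : Real.log Z ≤ η / 2 * (Z : ℝ) ^ (η * σ) := by
      have e2 : 2 / η * Real.log Z ≤ (Z : ℝ) ^ (η * σ) :=
        le_trans (mul_le_mul_of_nonneg_left (by linarith) (by positivity)) h1
      calc Real.log Z = η / 2 * (2 / η * Real.log Z) := by field_simp
        _ ≤ _ := by gcongr
    calc 2 * (Z : ℝ) ^ σ * Real.log Z ≤ 2 * (Z : ℝ) ^ σ * (η / 2 * (Z : ℝ) ^ (η * σ)) := by gcongr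
      _ = η * ((Z : ℝ) ^ (σ + η * σ)) := by
          have e : (Z : ℝ) ^ (σ + η * σ) = (Z : ℝ) ^ σ * (Z : ℝ) ^ (η * σ) := Real.rpow_add hZ0 _ _
          rw [e]; ring
      _ ≤ η * ((ℓ ^ A) ^ (σ + η * σ)) := by gcongr
      _ = η * ℓ ^ ((1 - η) * (1 + η)) := by
          rw [← Real.rpow_mul hl0]; congr 2; rw [← hAσ]; ring
      _ ≤ η * ℓ ^ (1 : ℝ) := by
          gcongr
          nlinarith
      _ = η * ℓ := by rw [Real.rpow_one]
  have hZσ1 : 1 ≤ (Z : ℝ) ^ σ := Real.one_le_rpow hZ1 hσ0.le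
  have hlZη : Real.log Z ≤ η * ℓ := by nlinarith
  set k := ⌊(1 - η) * ℓ / Real.log Z⌋₊ with hk
  have hk1 : (k : ℝ) * Real.log Z ≤ (1 - η) * ℓ := by
    rw [← le_div_iff₀ (by linarith)]
    exact Nat.floor_le (div_nonneg (mul_nonneg (by linarith) hl0) (by linarith))
  have hk2 : (1 - 2 * η) * ℓ ≤ k * Real.log Z := by
    have e := (Nat.lt_floor_add_one ((1 - η) * ℓ / Real.log Z)).le
    rw [← hk, div_le_iff₀ (by linarith)] at e
    linarith
  have hkl : (k : ℝ) ≤ ℓ := by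
    have : (k : ℝ) * 1 ≤ k * Real.log Z := by gcongr
    nlinarith
  have hsize : ((y ! ^ 2 * Z ^ k : ℕ) : ℝ) ≤ x := by
    have hy0 : (0 : ℝ) < y := by exact_mod_cast (by omega : 0 < y)
    rw [← Real.log_le_log_iff (by have := Nat.factorial_pos y; positivity) hx0]
    push_cast
    rw [Real.log_mul (by have := Nat.factorial_pos y; positivity) (by positivity), Real.log_pow,
      Real.log_pow]
    have e1 : Real.log (y ! : ℕ) ≤ (Z : ℝ) ^ σ * Real.log Z := by
      calc Real.log (y ! : ℕ) ≤ Real.log ((y : ℝ) ^ y) :=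
            Real.log_le_log (by exact_mod_cast Nat.factorial_pos y)
              (by exact_mod_cast Nat.factorial_le_pow y)
        _ = y * Real.log y := Real.log_pow _ _
        _ ≤ (Z : ℝ) ^ σ * Real.log Z := by
            refine mul_le_mul hyle (Real.log_le_log hy0 (hyle.trans ?_))
              (Real.log_natCast_nonneg y) (by positivity)
            calc (Z : ℝ) ^ σ ≤ (Z : ℝ) ^ (1 : ℝ) := Real.rpow_le_rpow_of_exponent_le hZ1 hσ1
              _ = Z := Real.rpow_one _
    push_cast
    linarith
  obtain ⟨S, hS, hScard⟩ := hgood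
  set S' := S.filter (y < ·) with hS'
  have hcard : (#S : ℝ) ≤ #S' + (Z : ℝ) ^ σ := by
    have e1 : #S ≤ #S' + y := by
      rw [hS', ← card_filter_add_card_filter_not (s := S) (y < ·)]
      refine Nat.add_le_add_left ?_ _
      calc _ ≤ #(Ioc 0 y) := card_le_card fun p hp => by
            rw [mem_filter] at hp
            exact mem_Ioc.2 ⟨(hS p hp.1).1.pos, not_lt.1 hp.2⟩
        _ = y := by simp
    have e2 : (#S : ℝ) ≤ #S' + y := by exact_mod_cast e1
    linarith
  have hS'card : (Z : ℝ) ^ (1 - η) / 2 ≤ #S' := by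
    have e : 2 * (Z : ℝ) ^ σ ≤ (Z : ℝ) ^ (1 - η) := by
      calc 2 * (Z : ℝ) ^ σ ≤ (Z : ℝ) ^ (1 / 4 - 3 * η) * (Z : ℝ) ^ σ := by
            gcongr; linarith
        _ = _ := by rw [← Real.rpow_add hZ0]; congr 1; rw [hσ]; ring
    linarith
  have hchoose := choose_le_countDiv h ha₂ hΔ hy3 S' (x := x) (k := k) (Z := Z)
    (fun p hp => (hS p (mem_filter.1 hp).1).2.1)
    (fun p hp => by
      obtain ⟨hpp, -, r, t, hrt, hr, ht⟩ := hS p (mem_filter.1 hp).1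
      rw [← hσ] at hr ht
      exact ⟨hpp, (mem_filter.1 hp).2, r, t, hrt, Nat.le_floor hr, Nat.le_floor ht⟩) hsize
  -- `#S' / (2 k)` is at least `Z ^ (1 / 4 - 6 η)`
  set w := (Z : ℝ) ^ (1 / 4 - 6 * η) with hw
  have hw1 : 1 ≤ w := Real.one_le_rpow hZ1 (by linarith)
  have hℓZ : ℓ ≤ 2 * (Z : ℝ) ^ (3 / 4 + 4 * η) := by
    calc ℓ = (ℓ ^ A) ^ (1 / A) := by
          rw [← Real.rpow_mul hl0, mul_one_div_cancel hA0.ne', Real.rpow_one]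
      _ ≤ (2 * Z : ℝ) ^ (1 / A) := by gcongr
      _ ≤ (2 * Z : ℝ) ^ (3 / 4 + 4 * η) := Real.rpow_le_rpow_of_exponent_le (by linarith) hA1
      _ = (2 : ℝ) ^ (3 / 4 + 4 * η) * (Z : ℝ) ^ (3 / 4 + 4 * η) :=
          Real.mul_rpow (by norm_num) hZ0.le
      _ ≤ (2 : ℝ) ^ (1 : ℝ) * (Z : ℝ) ^ (3 / 4 + 4 * η) := by
          gcongr
          · norm_num
          · linarith
      _ = _ := by rw [Real.rpow_one]
  have hkw : k * w + k ≤ #S' := by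
    calc k * w + k ≤ 2 * (k * w) := by nlinarith [Nat.cast_nonneg (α := ℝ) k]
      _ ≤ 2 * ((2 * (Z : ℝ) ^ (3 / 4 + 4 * η)) * w) := by
          gcongr; exact hkl.trans hℓZ
      _ = 8 * (Z : ℝ) ^ (1 - 2 * η) / 2 := by
          have : (Z : ℝ) ^ (3 / 4 + 4 * η) * w = (Z : ℝ) ^ (1 - 2 * η) := by
            rw [hw, ← Real.rpow_add hZ0]; congr 1; ring
          rw [← this]; ring
      _ ≤ (Z : ℝ) ^ η * (Z : ℝ) ^ (1 - 2 * η) / 2 := by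
          gcongr; linarith
      _ = (Z : ℝ) ^ (1 - η) / 2 := by
          rw [← Real.rpow_add hZ0]; congr 2; ring
      _ ≤ _ := hS'card
  have hfin := rpow_le_choose (by linarith) hkw
  calc x ^ (1 / 4 - 7 * η) ≤ w ^ k := by
        rw [Real.rpow_def_of_pos hx0, hw, ← Real.rpow_natCast, ← Real.rpow_mul hZ0.le,
          Real.rpow_def_of_pos hZ0, Real.exp_le_exp, ← hℓ]
        have e : (1 / 4 - 6 * η) * ((1 - 2 * η) * ℓ) ≤ (1 / 4 - 6 * η) * (k * Real.log Z) :=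
          mul_le_mul_of_nonneg_left hk2 (by linarith)
        have e2 : ℓ * (1 / 4 - 7 * η) ≤ (1 / 4 - 6 * η) * ((1 - 2 * η) * ℓ) := by
          have : 1 / 4 - 7 * η ≤ (1 / 4 - 6 * η) * (1 - 2 * η) := by nlinarith
          nlinarith
        linarith
    _ ≤ ((#S').choose k : ℝ) := hfin
    _ ≤ _ := by exact_mod_cast hchoose

end Primes

theorem statement4 (a₁ a₂ : ℤ) (u : ℕ → ℤ)
    (ha₂ : a₂ = 1 ∨ a₂ = -1) (hcop : IsCoprime a₁ a₂)
    (hu0 : u 0 = 0) (hu1 : u 1 = 1)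
    (hrec : ∀ n : ℕ, u (n + 2) = a₁ * u (n + 1) + a₂ * u n)
    (hΔ : a₁ ^ 2 + 4 * a₂ ≠ 0)
    (hnd : ∀ α β : ℂ, α ^ 2 - (a₁ : ℂ) * α - (a₂ : ℂ) = 0 →
      β ^ 2 - (a₁ : ℂ) * β - (a₂ : ℂ) = 0 → α ≠ β →
      ∀ m : ℕ, 0 < m → (α / β) ^ m ≠ 1) :
    ∀ ε : ℝ, 0 < ε → ∃ x₀ : ℝ, ∀ x : ℝ, x₀ ≤ x →
      x ^ (1 / 4 - ε : ℝ) ≤ (countDiv u x : ℝ) := by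
  intro ε hε
  have hη : 0 < min (ε / 7) (1 / 64) := by positivity
  have h := eventually_countDiv_ge ⟨hu0, hu1, hrec⟩ ha₂ hΔ hη (min_le_right _ _)
  obtain ⟨x₀, hx₀⟩ := Filter.eventually_atTop.1 h
  refine ⟨max x₀ 1, fun x hx => ?_⟩
  refine le_trans (Real.rpow_le_rpow_of_exponent_le (le_trans (le_max_right _ _) hx) ?_)
    (hx₀ x (le_trans (le_max_left _ _) hx))
  have := min_le_left (ε / 7) (1 / 64)
  linarith
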